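/- arXiv:2411.02111 — 3 statements merged into one kernel-verified Lean document; each statement's English description precedes it below -/
import Mathlib

section
/- Let G be a finite connected multigraph with all edge lengths equal to 1. Then for any vertices p, q, s of G: j_p(q,s) = ( t(G_{pq}) + t(G_{ps}) − t(G_{qs}) ) / (2·t(G)). -/
open scoped Classical

/-- A finite weighted multigraph (resistive electrical network): finitely many
vertices and edges; each edge `e` has two endpoints `ends e` and a positive
length (resistance) `len e`.  Multiple edges and self-loops are allowed. -/
structure WMG where
  V : Type
  E : Type
  instV : Fintype V
  instE : Fintype E
  ends : E → V × V
  len : E → ℝ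
  len_pos : ∀ e, 0 < len e

attribute [instance] WMG.instV WMG.instE

/-- The Moore–Penrose pseudoinverse of a real square matrix, characterized by
the four Penrose equations (it exists and is unique for real matrices). -/
noncomputable def Matrix.mpinv {n : Type} [Fintype n] (A : Matrix n n ℝ) : Matrix n n ℝ :=
  if h : ∃ B : Matrix n n ℝ,
      A * B * A = A ∧ B * A * B = B ∧ Matrix.transpose (A * B) = A * B ∧ Matrix.transpose (B * A) = B * A
  then h.choose else 0

namespace WMG

/-- Indicator function. -/
noncomputable def ind {α : Type} (x y : α) : ℝ := if x = y then 1 else 0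

/-- The weighted Laplacian: an edge `e` with endpoints `a, b` contributes
`(1/len e) * (δ_{ua} - δ_{ub}) * (δ_{va} - δ_{vb})` to the `(u,v)` entry.  So
the off-diagonal `(u,v)` entry is `-∑ 1/len e` over the edges joining `u` and
`v`, and all row sums are zero. -/
noncomputable def lap (G : WMG) : Matrix G.V G.V ℝ :=
  ∑ e : G.E, (G.len e)⁻¹ •
    Matrix.of (fun u v : G.V =>
      (ind u (G.ends e).1 - ind u (G.ends e).2) *
      (ind v (G.ends e).1 - ind v (G.ends e).2))

/-- Effective resistance `r(p,q) = L⁺pp - 2·L⁺pq + L⁺qq`. -/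
noncomputable def res (G : WMG) (p q : G.V) : ℝ :=
  G.lap.mpinv p p - 2 * G.lap.mpinv p q + G.lap.mpinv q q

/-- Voltage function `j_p(q,s) = L⁺pp - L⁺pq - L⁺ps + L⁺qs`. -/
noncomputable def volt (G : WMG) (p q s : G.V) : ℝ :=
  G.lap.mpinv p p - G.lap.mpinv p q - G.lap.mpinv p s + G.lap.mpinv q s

/-- Two vertices are adjacent if some edge has them as its endpoints. -/
def Adj (G : WMG) (u v : G.V) : Prop :=
  ∃ e : G.E, G.ends e = (u, v) ∨ G.ends e = (v, u)

/-- `u` and `v` are joined by a walk in `G`. -/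
def Reach (G : WMG) (u v : G.V) : Prop := Relation.ReflTransGen G.Adj u v

/-- `G` is connected. -/
def Connected (G : WMG) : Prop := Nonempty G.V ∧ ∀ u v : G.V, G.Reach u v

/-- Quotient graph: identify vertices along (the equivalence generated by) the
relation `r`; all edges are kept. -/
noncomputable def quot (G : WMG) (r : G.V → G.V → Prop) : WMG where
  V := Quot r
  E := G.E
  instV := Fintype.ofFinite _
  instE := G.instE
  ends e := (Quot.mk r (G.ends e).1, Quot.mk r (G.ends e).2)
  len := G.len
  len_pos := G.len_pos

/-- The canonical map from the vertices of `G` to those of a quotient of `G`. -/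
def quotMap (G : WMG) (r : G.V → G.V → Prop) : G.V → (G.quot r).V := Quot.mk r

/-- `G_{pq}`: identify the vertices `p` and `q`. -/
noncomputable def ident2 (G : WMG) (p q : G.V) : WMG :=
  G.quot (fun x y => x = p ∧ y = q)

def ident2Map (G : WMG) (p q : G.V) : G.V → (G.ident2 p q).V :=
  G.quotMap _

/-- `G_{pqs}`: identify the vertices `p`, `q`, `s` into a single vertex. -/
noncomputable def ident3 (G : WMG) (p q s : G.V) : WMG :=
  G.quot (fun x y => (x = p ∧ y = q) ∨ (x = p ∧ y = s))

/-- `G_{pq,st}`: identify `p` with `q` and, separately, `s` with `t`. -/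
noncomputable def ident22 (G : WMG) (p q s t : G.V) : WMG :=
  G.quot (fun x y => (x = p ∧ y = q) ∨ (x = s ∧ y = t))

/-- `G_S`: identify all vertices in the set `S` into a single vertex. -/
noncomputable def identSet (G : WMG) (S : Set G.V) : WMG :=
  G.quot (fun x y => x ∈ S ∧ y ∈ S)

/-- `G − e`: delete the edge `e` (keeping all vertices). -/
noncomputable def delete (G : WMG) (e : G.E) : WMG where
  V := G.V
  E := {f : G.E // f ≠ e}
  instV := G.instV
  instE := Fintype.ofFinite _
  ends f := G.ends f.1
  len f := G.len f.1
  len_pos f := G.len_pos f.1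

/-- `e` is a bridge if `G − e` is disconnected. -/
def IsBridge (G : WMG) (e : G.E) : Prop := ¬ (G.delete e).Connected

/-- `Ḡ_e`: contract the edge `e` (identify its endpoints and delete it). -/
noncomputable def contract (G : WMG) (e : G.E) : WMG :=
  (G.delete e).quot (fun x y => x = (G.ends e).1 ∧ y = (G.ends e).2)

def contractMap (G : WMG) (e : G.E) : G.V → (G.contract e).V := Quot.mk _

/-- Replace the length of the edge `e` by `L'`. -/
noncomputable def setLen (G : WMG) (e : G.E) (L' : ℝ) (hL' : 0 < L') : WMG where
  V := G.V
  E := G.E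
  instV := G.instV
  instE := G.instE
  ends := G.ends
  len f := if f = e then L' else G.len f
  len_pos f := by
    by_cases hf : f = e
    · simpa [hf] using hL'
    · simpa [hf] using G.len_pos f

/-- `T` is (the edge set of) a spanning tree of `G`: using only edges of `T`
any two vertices are joined, and `T` has (number of vertices) − 1 edges. -/
def IsSpanningTree (G : WMG) (T : Finset G.E) : Prop :=
  (∀ u v : G.V, Relation.ReflTransGen
      (fun x y => ∃ e ∈ T, G.ends e = (x, y) ∨ G.ends e = (y, x)) u v) ∧
  T.card = Fintype.card G.V - 1

/-- `t G`: the number of spanning trees of `G` (equals `1` for a one-vertex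
graph; self-loops contribute nothing). -/
noncomputable def t (G : WMG) : ℕ := Nat.card {T : Finset G.E // G.IsSpanningTree T}

/-- `t(G_{pq})`, with the convention `t(G_{pp}) = 0`. -/
noncomputable def t2 (G : WMG) (p q : G.V) : ℕ :=
  if p = q then 0 else (G.ident2 p q).t

/-- Disjoint union of two graphs. -/
noncomputable def disjUnion (G₁ G₂ : WMG) : WMG where
  V := G₁.V ⊕ G₂.V
  E := G₁.E ⊕ G₂.E
  instV := inferInstance
  instE := inferInstance
  ends := Sum.elim (fun e => (Sum.inl (G₁.ends e).1, Sum.inl (G₁.ends e).2))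
                   (fun e => (Sum.inr (G₂.ends e).1, Sum.inr (G₂.ends e).2))
  len := Sum.elim G₁.len G₂.len
  len_pos := by
    rintro (e | e)
    · exact G₁.len_pos e
    · exact G₂.len_pos e

/-- Glue `G₁` and `G₂` along two pairs of vertices (`p₁ ↔ p₂`, `q₁ ↔ q₂`):
the result is the graph `G = G₁ ∪ G₂` with `G₁ ∩ G₂ = {p, q}` (the two pieces
share exactly these two vertices and no edges). -/
noncomputable def glue2 (G₁ G₂ : WMG) (p₁ q₁ : G₁.V) (p₂ q₂ : G₂.V) : WMG :=
  (G₁.disjUnion G₂).quot (fun x y =>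
    (x = Sum.inl p₁ ∧ y = Sum.inr p₂) ∨ (x = Sum.inl q₁ ∧ y = Sum.inr q₂))

/-- Glue `G₁` and `G₂` along three pairs of vertices: the result is the graph
`G = G₁ ∪ G₂` with `G₁ ∩ G₂ = {p, q, s}`. -/
noncomputable def glue3 (G₁ G₂ : WMG) (p₁ q₁ s₁ : G₁.V) (p₂ q₂ s₂ : G₂.V) : WMG :=
  (G₁.disjUnion G₂).quot (fun x y =>
    (x = Sum.inl p₁ ∧ y = Sum.inr p₂) ∨ (x = Sum.inl q₁ ∧ y = Sum.inr q₂) ∨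
    (x = Sum.inl s₁ ∧ y = Sum.inr s₂))

/-- Disjoint union of a finite family of graphs. -/
noncomputable def sigmaGraph {k : ℕ} (G : Fin k → WMG) : WMG where
  V := Σ i, (G i).V
  E := Σ i, (G i).E
  instV := inferInstance
  instE := inferInstance
  ends e := (⟨e.1, ((G e.1).ends e.2).1⟩, ⟨e.1, ((G e.1).ends e.2).2⟩)
  len e := (G e.1).len e.2
  len_pos e := (G e.1).len_pos e.2

/-- Glue the family `G i` along a common pair of vertices (all the `p i` are
identified together, and all the `q i` are identified together): the result is
`G = ⋃ G_i` with `G_i ∩ G_j = {p, q}` for all `i ≠ j`. -/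
noncomputable def glueFam {k : ℕ} (G : Fin k → WMG) (p q : ∀ i, (G i).V) : WMG :=
  (sigmaGraph G).quot (fun x y =>
    (∃ i j, x = ⟨i, p i⟩ ∧ y = ⟨j, p j⟩) ∨ (∃ i j, x = ⟨i, q i⟩ ∧ y = ⟨j, q j⟩))

/-- The cyclic successor on `Fin k`. -/
def finSucc {k : ℕ} (i : Fin k) : Fin k :=
  ⟨(i.1 + 1) % k, Nat.mod_lt _ (Nat.lt_of_le_of_lt (Nat.zero_le _) i.2)⟩

/-- `CG_k`: replace the `i`-th edge of the cycle `C_k` by the graph `G i`,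
identifying `t i` (of `G i`) with `s (i+1)` (of `G (i+1)`), cyclically. -/
noncomputable def cycleGlue {k : ℕ} (G : Fin k → WMG) (s t : ∀ i, (G i).V) : WMG :=
  (sigmaGraph G).quot (fun x y =>
    ∃ i, x = ⟨i, t i⟩ ∧ y = ⟨finSucc i, s (finSucc i)⟩)

/-- Join a new vertex `u` (the vertex `none`) to the vertex `p i` of `H` by
`a i` parallel unit edges, for each `i`.  The resulting graph `G` has `H = G − u`,
and if `p` is injective with all `a i ≥ 1` then `N_G(u) = {p 1, …, p n}` with
`a i` parallel edges joining `u` to `p i`. -/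
noncomputable def cone (H : WMG) {n : ℕ} (p : Fin n → H.V) (a : Fin n → ℕ) : WMG where
  V := Option H.V
  E := H.E ⊕ (Σ i : Fin n, Fin (a i))
  instV := inferInstance
  instE := inferInstance
  ends := Sum.elim (fun e => (some (H.ends e).1, some (H.ends e).2))
                   (fun e => (none, some (p e.1)))
  len := Sum.elim H.len (fun _ => 1)
  len_pos := by
    rintro (e | e)
    · exact H.len_pos e
    · exact one_pos

/-- The path graph `P_n` on `n` vertices `0, 1, …, n-1`, unit edge lengths. -/
noncomputable def path (n : ℕ) : WMG where
  V := Fin n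
  E := Fin (n - 1)
  instV := inferInstance
  instE := inferInstance
  ends i := (⟨i.1, by have := i.2; omega⟩, ⟨i.1 + 1, by have := i.2; omega⟩)
  len _ := 1
  len_pos _ := one_pos

/-- The cycle graph `C_n` on `n` vertices, unit edge lengths. -/
noncomputable def cycle (n : ℕ) : WMG where
  V := Fin n
  E := Fin n
  instV := inferInstance
  instE := inferInstance
  ends i := (i, finSucc i)
  len _ := 1
  len_pos _ := one_pos

/-- The modified fan graph `F̄an_n`: the path `P_n` together with one new hub
vertex joined to each path vertex by `a` parallel edges. -/
noncomputable def fanGraph (n a : ℕ) : WMG :=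
  (path n).cone (fun i : Fin n => i) (fun _ => a)

/-- The modified wheel graph `W̄_n`: the cycle `C_n` together with one new hub
vertex joined to each cycle vertex by `a` parallel edges. -/
noncomputable def wheelGraph (n a : ℕ) : WMG :=
  (cycle n).cone (fun i : Fin n => i) (fun _ => a)

end WMG

/-- The Morgan–Voyce polynomial `B_m(x) = ∑_{k=0}^m C(m+k+1, m−k) x^k`. -/
noncomputable def morganVoyce (m : ℕ) (x : ℝ) : ℝ :=
  ∑ k ∈ Finset.range (m + 1), (Nat.choose (m + k + 1) (m - k) : ℝ) * x ^ k

/-- The polynomial `W_m(x) = ∑_{k=0}^m ((2m+2)/(m+2+k)) C(m+2+k, m−k) x^k`. -/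
noncomputable def wheelPoly (m : ℕ) (x : ℝ) : ℝ :=
  ∑ k ∈ Finset.range (m + 1),
    ((2 * m + 2 : ℝ) / (m + 2 + k : ℝ)) * (Nat.choose (m + 2 + k) (m - k) : ℝ) * x ^ k

/-- The Lucas numbers: `L₀ = 2`, `L₁ = 1`, `L_{m+2} = L_m + L_{m+1}`
(so `L₂ = 3`). -/
def lucas : ℕ → ℕ
  | 0 => 2
  | 1 => 1
  | n + 2 => lucas n + lucas (n + 1)

namespace Matrix

section GramOn

variable {ι n R : Type*} [CommRing R]

/-- The Gram-type matrix `∑ e ∈ S, (A e)ᵀ * (A e)` of the rows of `A` indexed by `S`. -/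
def gramOn (A : Matrix ι n R) (S : Finset ι) : Matrix n n R :=
  of fun i j => ∑ e ∈ S, A e i * A e j

theorem gramOn_eq_transpose_mul_self (A : Matrix ι n R) (S : Finset ι) :
    A.gramOn S = (A.submatrix (Subtype.val : S → ι) id)ᵀ * A.submatrix Subtype.val id := by
  ext i j
  exact (Finset.sum_coe_sort S fun e => A e i * A e j).symm

variable [Fintype n] [DecidableEq n]

theorem det_gramOn_eq_sum (A : Matrix ι n R) (S : Finset ι) :
    (A.gramOn S).det =
      ∑ r ∈ Fintype.piFinset fun _ : n => S, (of fun i j => A (r i) i * A (r i) j).det := by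
  have h : A.gramOn S = fun i => ∑ e ∈ S, fun j => A e i * A e j := by
    ext i j
    simp [gramOn]
  rw [h]
  exact (detRowAlternating (R := R) (n := n)).toMultilinearMap.map_sum_finset
    (fun i e j => A e i * A e j) fun _ => S

theorem det_smul_rows_eq_zero (A : Matrix ι n R) {r : n → ι} (hr : ¬ Function.Injective r) :
    (of fun i j => A (r i) i * A (r i) j).det = 0 := by
  obtain ⟨i, j, hij, hne⟩ : ∃ i j, r i = r j ∧ i ≠ j := by
    simpa [Function.Injective] using hr
  have h := det_mul_column (fun i => A (r i) i) (of fun i j => A (r i) j)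
  simp only [of_apply] at h
  rw [h, det_zero_of_row_eq hne (by ext k; simp [hij]), mul_zero]

/-- The Cauchy–Binet formula for `Aᵀ * A`. -/
theorem det_transpose_mul_self_eq_sum [Fintype ι] (A : Matrix ι n R) :
    (Aᵀ * A).det =
      ∑ S : Finset ι with S.card = Fintype.card n, (A.gramOn S).det := by
  have hA : Aᵀ * A = A.gramOn Finset.univ := by
    ext i j
    simp [gramOn, mul_apply]
  simp only [hA, det_gramOn_eq_sum, Fintype.piFinset_univ]
  rw [Finset.sum_comm' (t' := Finset.univ)
    (s' := fun r => Finset.univ.filter fun S : Finset ι =>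
      S.card = Fintype.card n ∧ ∀ i, r i ∈ S) (by simp)]
  refine Finset.sum_congr rfl fun r _ => ?_
  by_cases hr : Function.Injective r
  · have hc : (Finset.univ.image r).card = Fintype.card n := by
      rw [Finset.card_image_of_injective _ hr, Finset.card_univ]
    rw [Finset.sum_eq_single (Finset.univ.image r)]
    · intro S hS hne
      simp only [Finset.mem_filter, Finset.mem_univ, true_and] at hS
      refine absurd (Finset.eq_of_subset_of_card_le ?_ (by omega)).symm hne
      simpa [Finset.subset_iff] using hS.2
    · simp [hc]
  · simp [det_smul_rows_eq_zero A hr]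

/-- If the rows of an integer matrix generate `ℤⁿ` and there are `n` of them, then the
Gram determinant is one. -/
theorem det_gramOn_eq_one (A : Matrix ι n ℤ) (S : Finset ι) (hS : S.card = Fintype.card n)
    (C : Matrix n S ℤ) (hC : C * A.submatrix (Subtype.val : S → ι) id = 1) :
    (A.gramOn S).det = 1 := by
  let e : S ≃ n := Fintype.equivOfCardEq (by simpa using hS)
  set B := A.submatrix (Subtype.val : S → ι) id
  have hB : A.gramOn S = (B.submatrix e.symm id)ᵀ * B.submatrix e.symm id := by
    rw [gramOn_eq_transpose_mul_self, transpose_submatrix]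
    exact (submatrix_mul_equiv Bᵀ B id e.symm id).symm
  have hCB : C.submatrix id e.symm * B.submatrix e.symm id = 1 := by
    rw [submatrix_mul_equiv C B id e.symm id, hC]
    simp
  have hu : IsUnit (B.submatrix e.symm id).det := by
    have := congrArg det hCB
    rw [det_mul, det_one] at this
    exact IsUnit.of_mul_eq_one_right _ this
  rw [hB, det_mul, det_transpose, Int.isUnit_mul_self hu]

theorem det_gramOn_eq_zero (A : Matrix ι n ℤ) (S : Finset ι) (v : n → ℤ) (hv : v ≠ 0)
    (h : ∀ e ∈ S, A e ⬝ᵥ v = 0) : (A.gramOn S).det = 0 := by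
  refine exists_mulVec_eq_zero_iff.1 ⟨v, hv, ?_⟩
  ext i
  simp only [gramOn, mulVec, dotProduct, of_apply, Finset.sum_mul, Pi.zero_apply]
  rw [Finset.sum_comm]
  refine Finset.sum_eq_zero fun e he => ?_
  have := h e he
  simp only [dotProduct] at this
  simp only [mul_assoc, ← Finset.mul_sum, this, mul_zero]

end GramOn

/-- Every real symmetric matrix has a Moore–Penrose pseudoinverse. -/
theorem exists_penrose_of_isSymm {n : Type} [Fintype n] {A : Matrix n n ℝ} (hA : A.IsSymm) :
    ∃ B : Matrix n n ℝ,
      A * B * A = A ∧ B * A * B = B ∧ (A * B)ᵀ = A * B ∧ (B * A)ᵀ = B * A := by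
  have hH : A.IsHermitian := by
    rwa [IsHermitian, conjTranspose_eq_transpose_of_trivial]
  obtain ⟨U, D, hU, hAU⟩ : ∃ (U : Matrix n n ℝ) (d : n → ℝ), Uᵀ * U = 1 ∧
      A = U * diagonal d * Uᵀ := by
    refine ⟨hH.eigenvectorUnitary, hH.eigenvalues, ?_, ?_⟩
    · have := Unitary.coe_star_mul_self hH.eigenvectorUnitary
      rwa [star_eq_conjTranspose, conjTranspose_eq_transpose_of_trivial] at this
    · have := hH.spectral_theorem
      rw [Unitary.conjStarAlgAut_apply, star_eq_conjTranspose,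
        conjTranspose_eq_transpose_of_trivial] at this
      exact this
  have hmul : ∀ f g : n → ℝ, U * diagonal f * Uᵀ * (U * diagonal g * Uᵀ) =
      U * diagonal (fun i => f i * g i) * Uᵀ := by
    intro f g
    rw [← diagonal_mul_diagonal]
    calc _ = U * diagonal f * (Uᵀ * U) * diagonal g * Uᵀ := by simp only [Matrix.mul_assoc]
      _ = _ := by rw [hU, Matrix.mul_one]; simp only [Matrix.mul_assoc]
  have hsymm : ∀ f : n → ℝ, (U * diagonal f * Uᵀ)ᵀ = U * diagonal f * Uᵀ := by
    intro f
    simp [transpose_mul, Matrix.mul_assoc]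
  have hinv : ∀ x : ℝ, x⁻¹ * x * x⁻¹ = x⁻¹ := fun x => by
    by_cases hx : x = 0 <;> simp [hx]
  refine ⟨U * diagonal (fun i => (D i)⁻¹) * Uᵀ, ?_, ?_, ?_, ?_⟩
  · rw [hAU, hmul, hmul]; simp only [mul_inv_mul_cancel]
  · rw [hAU, hmul, hmul]
    simp only [hinv]
  · rw [hAU, hmul, hsymm]
  · rw [hAU, hmul, hsymm]

theorem mpinv_spec_of_isSymm {n : Type} [Fintype n] {A : Matrix n n ℝ} (hA : A.IsSymm) :
    A * A.mpinv * A = A ∧ A.mpinv * A * A.mpinv = A.mpinv ∧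
      (A * A.mpinv)ᵀ = A * A.mpinv ∧ (A.mpinv * A)ᵀ = A.mpinv * A := by
  have h := exists_penrose_of_isSymm hA
  rw [mpinv, dif_pos h]
  exact h.choose_spec

theorem isSymm_mpinv {n : Type} [Fintype n] {A : Matrix n n ℝ} (hA : A.IsSymm) :
    A.mpinv.IsSymm := by
  obtain ⟨h1, h2, h3, h4⟩ := mpinv_spec_of_isSymm hA
  set X := A.mpinv
  rw [transpose_mul, hA.eq] at h3 h4
  have h5 : A * (A * X) = A := by
    have := congrArg transpose h1
    rwa [transpose_mul, transpose_mul, hA.eq, h3] at this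
  have h6 : X * A = A * X := by
    calc X * A = X * (A * (A * X)) := by rw [h5]
      _ = A * (Xᵀ * A) * X := by rw [← Matrix.mul_assoc, ← h4]; simp only [Matrix.mul_assoc]
      _ = A * X := by rw [h3, h5]
  have h7 : Xᵀ * A * Xᵀ = Xᵀ := by
    have := congrArg transpose h2
    rwa [transpose_mul, transpose_mul, hA.eq, ← Matrix.mul_assoc] at this
  calc Xᵀ = X * (A * Xᵀ) := by rw [← Matrix.mul_assoc, h6, ← h3, h7]
    _ = X := by rw [h4, h6, ← Matrix.mul_assoc, h2]

end Matrix

namespace WMG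

open scoped Matrix

/-- Two vertices are joined by an edge of `T`. -/
def AdjIn (G : WMG) (T : Finset G.E) (x y : G.V) : Prop :=
  ∃ e ∈ T, G.ends e = (x, y) ∨ G.ends e = (y, x)

theorem AdjIn.symm {G : WMG} {T : Finset G.E} {x y : G.V} (h : G.AdjIn T x y) :
    G.AdjIn T y x := by
  obtain ⟨e, he, h⟩ := h
  exact ⟨e, he, h.symm⟩

/-- Two vertices are joined by a walk using only edges of `T`. -/
def ReachIn (G : WMG) (T : Finset G.E) : G.V → G.V → Prop :=
  Relation.ReflTransGen (G.AdjIn T)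

theorem ReachIn.symm {G : WMG} {T : Finset G.E} {x y : G.V} (h : G.ReachIn T x y) :
    G.ReachIn T y x := by
  induction h with
  | refl => exact Relation.ReflTransGen.refl
  | tail _ h ih => exact Relation.ReflTransGen.head h.symm ih

theorem ReachIn.iff_of_ends {G : WMG} {T : Finset G.E} {q : G.V} {e : G.E} (he : e ∈ T) :
    G.ReachIn T q (G.ends e).1 ↔ G.ReachIn T q (G.ends e).2 :=
  ⟨fun h => h.tail ⟨e, he, Or.inl rfl⟩, fun h => h.tail ⟨e, he, Or.inr rfl⟩⟩

theorem isSpanningTree_iff {G : WMG} {T : Finset G.E} :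
    G.IsSpanningTree T ↔ (∀ u v, G.ReachIn T u v) ∧ T.card = Fintype.card G.V - 1 :=
  Iff.rfl

/-- The signed incidence matrix with the column of the vertex `q` removed. -/
noncomputable def rootedInc (G : WMG) (q : G.V) : Matrix G.E {v : G.V // v ≠ q} ℤ :=
  Matrix.of fun e w =>
    (if w.1 = (G.ends e).1 then 1 else 0) - (if w.1 = (G.ends e).2 then 1 else 0)

theorem rootedInc_dotProduct (G : WMG) (q : G.V) (e : G.E) (f : G.V → ℤ) (hf : f q = 0) :
    G.rootedInc q e ⬝ᵥ (fun w => f w.1) = f (G.ends e).1 - f (G.ends e).2 := by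
  have h := Fintype.sum_eq_add_sum_subtype_ne (fun v =>
    ((if v = (G.ends e).1 then (1 : ℤ) else 0) - (if v = (G.ends e).2 then 1 else 0)) * f v) q
  simp only [hf, mul_zero, zero_add] at h
  simp only [dotProduct, rootedInc, Matrix.of_apply]
  refine Eq.trans ?_ (h.symm.trans ?_)
  · rfl
  · simp [sub_mul, Finset.sum_sub_distrib]

theorem exists_sum_rootedInc_eq (G : WMG) (q : G.V) (T : Finset G.E) {v : G.V}
    (h : G.ReachIn T q v) :
    ∃ c : T → ℤ, ∀ w, ∑ e : T, c e * G.rootedInc q e w = if v = w.1 then 1 else 0 := by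
  induction h with
  | refl => exact ⟨0, fun w => by simp [w.2.symm]⟩
  | @tail b d _ hbd ih =>
    obtain ⟨c, hc⟩ := ih
    obtain ⟨e, he, h | h⟩ := hbd
    · refine ⟨c - Pi.single ⟨e, he⟩ 1, fun w => ?_⟩
      simp only [Pi.sub_apply, sub_mul, Finset.sum_sub_distrib, hc]
      simp [Pi.single_apply, rootedInc, h, eq_comm]
    · refine ⟨c + Pi.single ⟨e, he⟩ 1, fun w => ?_⟩
      simp only [Pi.add_apply, add_mul, Finset.sum_add_distrib, hc]
      simp [Pi.single_apply, rootedInc, h, eq_comm]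

theorem det_gramOn_rootedInc (G : WMG) (q : G.V) (T : Finset G.E)
    (hT : T.card = Fintype.card {v : G.V // v ≠ q}) :
    ((G.rootedInc q).gramOn T).det = if G.IsSpanningTree T then 1 else 0 := by
  have hT' : T.card = Fintype.card G.V - 1 := by
    rw [hT]
    simp
  by_cases hc : ∀ v, G.ReachIn T q v
  · rw [if_pos (isSpanningTree_iff.2 ⟨fun u v => (hc u).symm.trans (hc v), hT'⟩)]
    choose C hC using fun v => G.exists_sum_rootedInc_eq q T (hc v)
    refine Matrix.det_gramOn_eq_one _ T hT (Matrix.of fun v e => C v.1 e) ?_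
    ext v w
    simp only [Matrix.one_apply, Subtype.ext_iff]
    exact hC v.1 w
  · rw [if_neg fun h => hc ((isSpanningTree_iff.1 h).1 q)]
    push Not at hc
    obtain ⟨v, hv⟩ := hc
    let f : G.V → ℤ := fun x => if G.ReachIn T q x then 0 else 1
    have hq : f q = 0 := if_pos Relation.ReflTransGen.refl
    refine Matrix.det_gramOn_eq_zero _ T (fun w => f w.1) (fun h => ?_) fun e he => ?_
    · have hvq : v ≠ q := by
        rintro rfl
        exact hv Relation.ReflTransGen.refl
      have := congrFun h ⟨v, hvq⟩
      simp [f, hv] at this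
    · rw [rootedInc_dotProduct _ _ _ _ hq]
      simp [f, ReachIn.iff_of_ends he]

/-- The matrix-tree theorem. -/
theorem t_eq_det (G : WMG) (q : G.V) :
    (G.t : ℤ) = ((G.rootedInc q)ᵀ * G.rootedInc q).det := by
  rw [Matrix.det_transpose_mul_self_eq_sum, Finset.sum_congr rfl
    fun T hT => G.det_gramOn_rootedInc q T (Finset.mem_filter.1 hT).2, t,
    Nat.card_eq_fintype_card, Fintype.card_subtype, Finset.sum_boole, Finset.filter_filter]
  congr 2
  ext T
  simp only [Finset.mem_filter, Finset.mem_univ, true_and]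
  refine ⟨fun h => ⟨?_, h⟩, fun h => h.2⟩
  rw [h.2]
  simp

/-- Add a unit edge joining `p` and `q`. -/
noncomputable def addEdge (G : WMG) (p q : G.V) : WMG where
  V := G.V
  E := Option G.E
  instV := G.instV
  instE := inferInstance
  ends o := o.elim (p, q) G.ends
  len o := o.elim 1 G.len
  len_pos o := by
    cases o with
    | none => exact one_pos
    | some e => exact G.len_pos e

theorem addEdge_len {G : WMG} (hlen : ∀ e, G.len e = 1) (p q : G.V) :
    ∀ e, (G.addEdge p q).len e = 1 := by
  rintro (_ | e)
  · rfl
  · exact hlen e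

theorem addEdge_reachIn_map_some (G : WMG) (p q : G.V) (T : Finset G.E) (u v : G.V) :
    (G.addEdge p q).ReachIn (T.map Function.Embedding.some) u v ↔ G.ReachIn T u v := by
  have h : (G.addEdge p q).AdjIn (T.map Function.Embedding.some) = G.AdjIn T := by
    ext x y
    constructor
    · rintro ⟨o, ho, h⟩
      obtain ⟨e, he, rfl⟩ := Finset.mem_map.1 ho
      exact ⟨e, he, h⟩
    · rintro ⟨e, he, h⟩
      exact ⟨some e, Finset.mem_map_of_mem _ he, h⟩
  unfold ReachIn
  rw [h]
  rfl

theorem reachIn_of_mk_eq (G : WMG) (p q : G.V) (T : Finset G.E) {u v : G.V}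
    (h : G.ident2Map p q u = G.ident2Map p q v) :
    (G.addEdge p q).ReachIn T.insertNone u v := by
  replace h := Quot.eqvGen_exact h
  induction h with
  | rel x y h =>
    obtain ⟨rfl, rfl⟩ := h
    exact Relation.ReflTransGen.single ⟨none, Finset.none_mem_insertNone, Or.inl rfl⟩
  | refl x => exact Relation.ReflTransGen.refl
  | symm x y _ ih => exact ReachIn.symm ih
  | trans x y z _ _ ih₁ ih₂ => exact Relation.ReflTransGen.trans ih₁ ih₂

theorem ident2_reachIn (G : WMG) (p q : G.V) (T : Finset G.E) (u v : G.V) :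
    (G.ident2 p q).ReachIn T (G.ident2Map p q u) (G.ident2Map p q v) ↔
      (G.addEdge p q).ReachIn T.insertNone u v := by
  have hpq : G.ident2Map p q p = G.ident2Map p q q := Quot.sound ⟨rfl, rfl⟩
  constructor
  · suffices ∀ b, (G.ident2 p q).ReachIn T (G.ident2Map p q u) b → ∀ v, G.ident2Map p q v = b →
        (G.addEdge p q).ReachIn T.insertNone u v from fun h => this _ h v rfl
    intro b h
    induction h with
    | refl => exact fun v hv => G.reachIn_of_mk_eq p q T hv.symm
    | tail _ hbc ih =>
      intro v hv
      obtain ⟨e, he, h | h⟩ := hbc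
      · obtain ⟨h₁, h₂⟩ := Prod.ext_iff.1 h
        refine Relation.ReflTransGen.trans ((ih (G.ends e).1 h₁).tail
          ⟨some e, Finset.some_mem_insertNone.2 he, Or.inl rfl⟩) ?_
        exact G.reachIn_of_mk_eq p q T (h₂.trans hv.symm)
      · obtain ⟨h₁, h₂⟩ := Prod.ext_iff.1 h
        refine Relation.ReflTransGen.trans ((ih (G.ends e).2 h₂).tail
          ⟨some e, Finset.some_mem_insertNone.2 he, Or.inr rfl⟩) ?_
        exact G.reachIn_of_mk_eq p q T (h₁.trans hv.symm)
  · intro h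
    induction h with
    | refl => exact Relation.ReflTransGen.refl
    | @tail b c _ hbc ih =>
      obtain ⟨o, ho, h⟩ := hbc
      cases o with
      | none =>
        have : G.ident2Map p q b = G.ident2Map p q c := by
          rcases h with h | h <;> obtain ⟨rfl, rfl⟩ := Prod.ext_iff.1 h
          · exact hpq
          · exact hpq.symm
        rwa [← this]
      | some e =>
        refine ih.tail ⟨e, Finset.some_mem_insertNone.1 ho, ?_⟩
        have h : G.ends e = (b, c) ∨ G.ends e = (c, b) := h
        refine h.imp (fun h => ?_) fun h => ?_ <;>
        · show (Quot.mk _ (G.ends e).1, Quot.mk _ (G.ends e).2) = _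
          rw [h]
          rfl

theorem card_ident2 (G : WMG) {p q : G.V} (hpq : p ≠ q) :
    Fintype.card (G.ident2 p q).V = Fintype.card G.V - 1 := by
  have hb : Function.Bijective fun v : {v : G.V // v ≠ p} => G.ident2Map p q v.1 := by
    constructor
    · intro a b hab
      have := congrArg (Quot.lift (fun v => if v = p then q else v) (by
        rintro _ _ ⟨rfl, rfl⟩
        simp)) hab
      simpa [ident2Map, quotMap, a.2, b.2, Subtype.ext_iff] using this
    · rintro ⟨v⟩
      by_cases hv : v = p
      · exact ⟨⟨q, hpq.symm⟩, (Quot.sound ⟨hv, rfl⟩).symm⟩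
      · exact ⟨⟨v, hv⟩, rfl⟩
  rw [← Fintype.card_of_bijective hb]
  simp

theorem isSpanningTree_addEdge_map_some (G : WMG) (p q : G.V) (T : Finset G.E) :
    (G.addEdge p q).IsSpanningTree (T.map Function.Embedding.some) ↔ G.IsSpanningTree T := by
  refine and_congr
    (forall_congr' fun u => forall_congr' fun v => G.addEdge_reachIn_map_some p q T u v) ?_
  have h : Finset.card (α := Option G.E) (T.map Function.Embedding.some) = T.card :=
    Finset.card_map _
  exact Eq.congr_left h

theorem isSpanningTree_addEdge_insertNone (G : WMG) {p q : G.V} (hpq : p ≠ q)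
    (T : Finset G.E) :
    (G.addEdge p q).IsSpanningTree T.insertNone ↔ (G.ident2 p q).IsSpanningTree T := by
  have hV : 1 < Fintype.card G.V := Fintype.one_lt_card_iff.2 ⟨p, q, hpq⟩
  refine and_congr ⟨fun h => ?_, fun h u v => ?_⟩ ?_
  · rintro ⟨u⟩ ⟨v⟩
    exact (G.ident2_reachIn p q T u v).2 (h u v)
  · exact (G.ident2_reachIn p q T u v).1 (h _ _)
  · rw [card_ident2 G hpq]
    have h₁ : T.insertNone.card = T.card + 1 := Finset.card_insertNone T
    have h₂ : Fintype.card (G.addEdge p q).V = Fintype.card G.V := rfl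
    have h₃ : Finset.card (α := (G.ident2 p q).E) T = Finset.card (α := G.E) T := rfl
    have h₄ : Finset.card (α := (G.addEdge p q).E) T.insertNone =
      Finset.card (α := Option G.E) T.insertNone := rfl
    rw [h₂, h₃, h₄, h₁]
    omega

theorem t_addEdge (G : WMG) {p q : G.V} (hpq : p ≠ q) :
    (G.addEdge p q).t = G.t + (G.ident2 p q).t := by
  let f : {T : Finset G.E // G.IsSpanningTree T} ⊕
      {T : Finset G.E // (G.ident2 p q).IsSpanningTree T} →
      {T : Finset (Option G.E) // (G.addEdge p q).IsSpanningTree T} :=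
    Sum.elim
      (fun T => ⟨T.1.map Function.Embedding.some,
        (G.isSpanningTree_addEdge_map_some p q T.1).2 T.2⟩)
      (fun T => ⟨T.1.insertNone, (G.isSpanningTree_addEdge_insertNone hpq T.1).2 T.2⟩)
  have hf : Function.Bijective f := by
    constructor
    · rintro (⟨S, hS⟩ | ⟨S, hS⟩) (⟨T, hT⟩ | ⟨T, hT⟩) h
      · have h : S.map Function.Embedding.some = T.map Function.Embedding.some :=
          congrArg Subtype.val h
        obtain rfl := Finset.map_injective _ h
        rfl
      · have h : S.map Function.Embedding.some = T.insertNone := congrArg Subtype.val h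
        have : none ∈ S.map Function.Embedding.some := h ▸ Finset.none_mem_insertNone
        simp at this
      · have h : S.insertNone = T.map Function.Embedding.some := congrArg Subtype.val h
        have : none ∈ T.map Function.Embedding.some := h ▸ Finset.none_mem_insertNone
        simp at this
      · have h : S.insertNone = T.insertNone := congrArg Subtype.val h
        obtain rfl := Finset.insertNone.injective h
        rfl
    · rintro ⟨S, hS⟩
      by_cases hn : none ∈ S
      · have h : S.eraseNone.insertNone = S := by
          rw [Finset.insertNone_eraseNone, Finset.insert_eq_of_mem hn]
        refine ⟨Sum.inr ⟨S.eraseNone, ?_⟩, Subtype.ext h⟩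
        exact (G.isSpanningTree_addEdge_insertNone hpq _).1 (h.symm ▸ hS)
      · have h : S.eraseNone.map Function.Embedding.some = S := by
          rw [Finset.map_some_eraseNone, Finset.erase_eq_of_notMem hn]
        refine ⟨Sum.inl ⟨S.eraseNone, ?_⟩, Subtype.ext h⟩
        exact (G.isSpanningTree_addEdge_map_some p q _).1 (h.symm ▸ hS)
  have : Finite {T : Finset G.E // (G.ident2 p q).IsSpanningTree T} :=
    Subtype.finite (α := Finset G.E)
  exact (Nat.card_eq_of_bijective f hf).symm.trans Nat.card_sum

variable (G : WMG)

theorem lap_apply (hlen : ∀ e, G.len e = 1) (u v : G.V) :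
    G.lap u v = ∑ e : G.E, (ind u (G.ends e).1 - ind u (G.ends e).2) *
      (ind v (G.ends e).1 - ind v (G.ends e).2) := by
  simp [lap, Matrix.sum_apply, hlen]

theorem lap_isSymm : G.lap.IsSymm := by
  ext u v
  simp [lap, Matrix.sum_apply, mul_comm]

theorem sum_ind_mul (a : G.V) (x : G.V → ℝ) : ∑ v, ind v a * x v = x a := by
  simp [ind]

theorem lap_mulVec (hlen : ∀ e, G.len e = 1) (x : G.V → ℝ) (u : G.V) :
    (G.lap *ᵥ x) u = ∑ e : G.E, (ind u (G.ends e).1 - ind u (G.ends e).2) *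
      (x (G.ends e).1 - x (G.ends e).2) := by
  simp only [Matrix.mulVec, dotProduct, G.lap_apply hlen, Finset.sum_mul]
  rw [Finset.sum_comm]
  refine Finset.sum_congr rfl fun e _ => ?_
  simp only [mul_assoc, ← Finset.mul_sum, sub_mul, Finset.sum_sub_distrib, sum_ind_mul]

/-- A harmonic function on a connected network is constant. -/
theorem eq_of_lap_mulVec_eq_zero (hG : G.Connected) (hlen : ∀ e, G.len e = 1) {x : G.V → ℝ}
    (hx : G.lap *ᵥ x = 0) (u v : G.V) : x u = x v := by
  have hsum : ∑ e : G.E, (x (G.ends e).1 - x (G.ends e).2) ^ 2 = 0 := by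
    have h : ∑ u, x u * (G.lap *ᵥ x) u = 0 := by simp [hx]
    rw [← h]
    simp only [G.lap_mulVec hlen, Finset.mul_sum]
    rw [Finset.sum_comm]
    refine Finset.sum_congr rfl fun e _ => ?_
    have he : ∑ v, (ind v (G.ends e).1 - ind v (G.ends e).2) * x v =
        x (G.ends e).1 - x (G.ends e).2 := by
      simp only [sub_mul, Finset.sum_sub_distrib, sum_ind_mul]
    rw [sq]
    nth_rewrite 1 [← he]
    rw [Finset.sum_mul]
    exact Finset.sum_congr rfl fun v _ => by ring
  have hedge : ∀ e, x (G.ends e).1 = x (G.ends e).2 := fun e => by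
    have := (Finset.sum_eq_zero_iff_of_nonneg fun e _ => sq_nonneg _).1 hsum e (Finset.mem_univ e)
    exact sub_eq_zero.1 (pow_eq_zero_iff two_ne_zero |>.1 this)
  have h := hG.2 u v
  induction h with
  | refl => rfl
  | tail _ h ih =>
    obtain ⟨e, h | h⟩ := h <;> have := hedge e <;> rw [h] at this
    · exact ih.trans this
    · exact ih.trans this.symm

theorem lap_mul_mpinv_sub (hG : G.Connected) (hlen : ∀ e, G.len e = 1) (u p q : G.V) :
    (G.lap * G.lap.mpinv) u p - (G.lap * G.lap.mpinv) u q = ind u p - ind u q := by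
  obtain ⟨h₁, -, h₃, -⟩ := Matrix.mpinv_spec_of_isSymm G.lap_isSymm
  set Q := G.lap * G.lap.mpinv
  have h : G.lap * (1 - Q) = 0 := by
    have := congrArg Matrix.transpose h₁
    rw [Matrix.transpose_mul, G.lap_isSymm.eq, h₃] at this
    rw [Matrix.mul_sub, this, Matrix.mul_one, sub_self]
  have hcol := G.eq_of_lap_mulVec_eq_zero hG hlen (x := fun v => (1 - Q) v u)
    (by ext w; exact congrFun (congrFun h w) u) p q
  have hs : ∀ v, Q v u = Q u v := fun v => congrFun (congrFun h₃ u) v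
  simp only [Matrix.sub_apply, Matrix.one_apply, hs] at hcol
  simp only [ind, eq_comm (a := u)]
  linarith

/-- The Laplacian with the row and column of `q` removed. -/
noncomputable def redLap (q : G.V) : Matrix {v : G.V // v ≠ q} {v : G.V // v ≠ q} ℝ :=
  G.lap.submatrix Subtype.val Subtype.val

theorem redLap_eq (hlen : ∀ e, G.len e = 1) (q : G.V) :
    G.redLap q = ((G.rootedInc q)ᵀ * G.rootedInc q).map (Int.castRingHom ℝ) := by
  ext u v
  simp [redLap, G.lap_apply hlen, Matrix.mul_apply, rootedInc, ind]

theorem t_eq_det_redLap (hlen : ∀ e, G.len e = 1) (q : G.V) : (G.t : ℝ) = (G.redLap q).det := by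
  have h := congrArg (Int.castRingHom ℝ) (G.t_eq_det q)
  rw [RingHom.map_det] at h
  rw [G.redLap_eq hlen]
  simpa using h

theorem redLap_mul (hG : G.Connected) (hlen : ∀ e, G.len e = 1) (q : G.V) :
    G.redLap q * Matrix.of (fun v w : {v : G.V // v ≠ q} =>
      G.lap.mpinv v w - G.lap.mpinv v q - (G.lap.mpinv q w - G.lap.mpinv q q)) = 1 := by
  ext u w
  let y : G.V → ℝ := fun v => G.lap.mpinv v w - G.lap.mpinv v q
  have h := Fintype.sum_eq_add_sum_subtype_ne (fun v => G.lap u v * (y v - y q)) q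
  have hconst : ∑ v, G.lap u v * y q = 0 := by
    refine (G.lap_mulVec hlen (fun _ => y q) u).trans ?_
    simp
  have hy : ∑ v, G.lap u v * (y v - y q) = ind u.1 w.1 - ind u.1 q := by
    rw [← G.lap_mul_mpinv_sub hG hlen]
    simp only [mul_sub _ (y _), Finset.sum_sub_distrib, hconst, sub_zero, Matrix.mul_apply]
    simp only [y, mul_sub, Finset.sum_sub_distrib]
  rw [hy, sub_self, mul_zero, zero_add] at h
  refine Eq.trans h.symm ?_
  simp [ind, u.2, Matrix.one_apply, Subtype.ext_iff]

theorem redLap_addEdge {p q : G.V} (hpq : p ≠ q) (hlen : ∀ e, G.len e = 1) :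
    (G.addEdge p q).redLap q = G.redLap q +
      Matrix.replicateCol Unit (Pi.single (⟨p, hpq⟩ : {v : G.V // v ≠ q}) (1 : ℝ)) *
        Matrix.replicateRow Unit (Pi.single (⟨p, hpq⟩ : {v : G.V // v ≠ q}) (1 : ℝ)) := by
  have hlen' := addEdge_len hlen p q
  have hs : ∀ w : {v : G.V // v ≠ q}, ind w.1 p - ind w.1 q =
      (Pi.single ⟨p, hpq⟩ 1 : {v : G.V // v ≠ q} → ℝ) w := by
    intro w
    rw [Pi.single_apply]
    simp [ind, w.2, Subtype.ext_iff]
  have hmul : ∀ u v : {v : G.V // v ≠ q},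
      (Matrix.replicateCol Unit (Pi.single (⟨p, hpq⟩ : {v : G.V // v ≠ q}) (1 : ℝ)) *
        Matrix.replicateRow Unit (Pi.single (⟨p, hpq⟩ : {v : G.V // v ≠ q}) (1 : ℝ))) u v =
      (ind u.1 p - ind u.1 q) * (ind v.1 p - ind v.1 q) := by
    intro u v
    simp only [hs, Matrix.mul_apply, Matrix.replicateCol_apply, Matrix.replicateRow_apply,
      Finset.univ_unique, Finset.sum_singleton]
  refine Matrix.ext fun (u v : {v : G.V // v ≠ q}) => ?_
  have h := (G.addEdge p q).lap_apply hlen' u.1 v.1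
  refine (h.trans (Fintype.sum_option _)).trans ((add_comm _ _).trans ?_)
  exact congrArg₂ _ (G.lap_apply hlen u.1 v.1).symm (hmul u v).symm

theorem t_ne_zero (hG : G.Connected) (hlen : ∀ e, G.len e = 1) : (G.t : ℝ) ≠ 0 := by
  obtain ⟨q⟩ := hG.1
  have h := congrArg Matrix.det (G.redLap_mul hG hlen q)
  rw [Matrix.det_mul, Matrix.det_one] at h
  rw [G.t_eq_det_redLap hlen q]
  exact left_ne_zero_of_mul_eq_one h

/-- The effective resistance is a ratio of numbers of spanning trees. -/
theorem res_eq_t2_div_t (hG : G.Connected) (hlen : ∀ e, G.len e = 1) (p q : G.V) :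
    G.res p q = G.t2 p q / G.t := by
  rw [eq_div_iff (G.t_ne_zero hG hlen)]
  by_cases hpq : p = q
  · subst hpq
    rw [t2, if_pos rfl, res]
    push_cast
    ring
  have hlen' := addEdge_len hlen p q
  have hM := G.redLap_mul hG hlen q
  have hdet : IsUnit (G.redLap q).det :=
    isUnit_iff_ne_zero.2 (G.t_eq_det_redLap hlen q ▸ G.t_ne_zero hG hlen)
  have h := (G.addEdge p q).t_eq_det_redLap hlen' q
  have h' : (G.addEdge p q).redLap q = _ := G.redLap_addEdge hpq hlen
  have hsymm : G.lap.mpinv q p = G.lap.mpinv p q :=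
    congrFun (congrFun (Matrix.isSymm_mpinv G.lap_isSymm) p) q
  rw [h', t_addEdge G hpq] at h
  have h'' := h.trans (Matrix.det_add_replicateCol_mul_replicateRow hdet _ _)
  rw [Matrix.inv_eq_right_inv hM, ← G.t_eq_det_redLap hlen, Matrix.det_unique] at h''
  simp [Matrix.mul_apply, Matrix.replicateRow, Matrix.replicateCol, Pi.single_apply, hsymm] at h''
  simp only [t2, if_neg hpq, res]
  linarith

end WMG

/-- For a finite connected multigraph `G` with all edge lengths `1` and any
vertices `p, q, s`:
`j_p(q,s) = (t(G_{pq}) + t(G_{ps}) - t(G_{qs})) / (2 t(G))`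
(with the convention `t(G_{xx}) = 0`). -/
theorem volt_eq_spanning_tree_ratio (G : WMG) (hG : G.Connected)
    (hlen : ∀ e, G.len e = 1) (p q s : G.V) :
    G.volt p q s = ((G.t2 p q : ℝ) + (G.t2 p s : ℝ) - (G.t2 q s : ℝ)) /
      (2 * (G.t : ℝ)) := by
  have h : G.volt p q s = (G.res p q + G.res p s - G.res q s) / 2 := by
    simp only [WMG.volt, WMG.res]
    ring
  simp only [h, G.res_eq_t2_div_t hG hlen]
  ring
end

section
/- Let G = G₁ ∪ G₂ be a connected multigraph which is the union of two subgraphs with G₁ ∩ G₂ = {p, q, s} for three vertices p, q, s. Writing a_i = t(G_{i,ps}), b_i = t(G_{i,pq}), c_i = t(G_{i,qs}) for i ∈ {1,2}, we have t(G) = t(G₁)·t(G_{2,pqs}) + t(G₂)·t(G_{1,pqs}) + (1/2)·[ a₁(−a₂+b₂+c₂) + b₁(a₂−b₂+c₂) + c₁(a₂+b₂−c₂) ]. In particular, if G₁ = G₂ glued along the same three vertices p, q, s, then t(G) = 4·t(G₁)·t(G_{1,pqs}). -/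
open scoped Classical

namespace WMG

theorem ind_self {α : Type} (x : α) : ind x x = 1 := if_pos rfl

theorem ind_of_ne {α : Type} {x y : α} (h : x ≠ y) : ind x y = 0 := if_neg h

theorem ind_congr {α β : Type} {x y : α} {x' y' : β} (h : x = y ↔ x' = y') :
    ind x y = ind x' y' := by
  simp only [ind, h]

/-- The reduced signed incidence matrix of a graph with edge endpoints `ends`, whose vertices are
labelled by `f`; the vertices labelled `none` form the root, whose row is left out. -/
noncomputable def incMatrix {V E m : Type} (ends : E → V × V) (f : V → Option m) : Matrix m E ℝ :=
  Matrix.of fun w e => ind (f (ends e).1) (some w) - ind (f (ends e).2) (some w)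

/-- A square reduced incidence matrix has determinant `0`, `1` or `-1`. -/
theorem sq_det_incMatrix_fin (n : ℕ) (a b : Fin n → Option (Fin n)) :
    (Matrix.of fun w e => ind (a e) (some w) - ind (b e) (some w)).det ^ 2 = 0 ∨
    (Matrix.of fun w e => ind (a e) (some w) - ind (b e) (some w)).det ^ 2 = 1 := by
  induction n with
  | zero => right; simp
  | succ n ih =>
    set M : Matrix (Fin (n + 1)) (Fin (n + 1)) ℝ :=
      Matrix.of fun w e => ind (a e) (some w) - ind (b e) (some w) with hM
    by_cases h : ∃ e, a e = none ∨ b e = none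
    · obtain ⟨e, he⟩ := h
      obtain ⟨o, c, hc, hcol⟩ : ∃ (o : Option (Fin (n + 1))) (c : ℝ), c ^ 2 = 1 ∧
          ∀ w, M w e = c * ind o (some w) := by
        rcases he with he | he
        · exact ⟨b e, -1, by norm_num, fun w => by simp [hM, he, ind_of_ne]⟩
        · exact ⟨a e, 1, by norm_num, fun w => by simp [hM, he, ind]⟩
      rcases o with _ | i
      · left
        rw [Matrix.det_eq_zero_of_column_eq_zero e (fun w => by simp [hcol, ind])]
        simp
      · have hdet : M.det = (-1) ^ (i + e : ℕ) * c *
            (M.submatrix i.succAbove e.succAbove).det := by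
          rw [Matrix.det_succ_column M e, Finset.sum_eq_single i]
          · simp [hcol, ind]
          · intro w _ hw
            simp [hcol, ind, hw.symm]
          · simp
        have key : ∀ x : Option (Fin (n + 1)), ∃ y : Option (Fin n), ∀ w,
            x = some (i.succAbove w) ↔ y = some w := by
          intro x
          by_cases hx : ∃ w, x = some (i.succAbove w)
          · obtain ⟨w, rfl⟩ := hx
            exact ⟨some w, fun w' => by simp⟩
          · exact ⟨none, fun w => by simpa using fun h => hx ⟨w, h⟩⟩
        choose g hg using key
        have hsub : M.submatrix i.succAbove e.succAbove =
            Matrix.of fun w k => ind (g (a (e.succAbove k))) (some w) -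
              ind (g (b (e.succAbove k))) (some w) := by
          ext w k
          simp only [hM, Matrix.submatrix_apply, Matrix.of_apply]
          rw [ind_congr (hg _ w), ind_congr (hg _ w)]
        rw [hdet, mul_pow, mul_pow, hc, ← pow_mul, mul_comm _ 2, pow_mul, hsub]
        simpa using ih (fun k => g (a (e.succAbove k))) (fun k => g (b (e.succAbove k)))
    · left
      push Not at h
      have h0 : M.det = 0 := by
        refine Matrix.exists_vecMul_eq_zero_iff.mp ⟨fun _ => 1, ?_, ?_⟩
        · intro h1
          simpa using congrFun h1 0
        · ext e
          obtain ⟨x, hx⟩ := Option.ne_none_iff_exists'.mp (h e).1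
          obtain ⟨y, hy⟩ := Option.ne_none_iff_exists'.mp (h e).2
          simp [Matrix.vecMul, dotProduct, hM, hx, hy, ind]
      simp [h0]

theorem sq_det_incMatrix {V m : Type} [Fintype m] [DecidableEq m] (ends : m → V × V)
    (f : V → Option m) :
    (incMatrix ends f).det ^ 2 = 0 ∨ (incMatrix ends f).det ^ 2 = 1 := by
  let φ := Fintype.equivFin m
  have h := sq_det_incMatrix_fin (Fintype.card m)
    (fun i => (f (ends (φ.symm i)).1).map φ) (fun i => (f (ends (φ.symm i)).2).map φ)
  have key : ∀ (x : Option m) (w : Fin (Fintype.card m)),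
      x.map φ = some w ↔ x = some (φ.symm w) := by
    intro x w
    cases x <;> simp [Equiv.eq_symm_apply]
  have heq : (Matrix.of fun w e => ind ((f (ends (φ.symm e)).1).map φ) (some w) -
      ind ((f (ends (φ.symm e)).2).map φ) (some w)) =
      (incMatrix ends f).submatrix φ.symm φ.symm := by
    ext w e
    simp only [incMatrix, Matrix.submatrix_apply, Matrix.of_apply]
    rw [ind_congr (key _ w), ind_congr (key _ w)]
  rwa [heq, Matrix.det_submatrix_equiv_self] at h

/-- The Cauchy–Binet formula for `A * Aᵀ`, with the sum taken over all choices of columns. -/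
theorem factorial_mul_det_mul_transpose {m E : Type} [Fintype m] [DecidableEq m] [Fintype E]
    [DecidableEq E] (A : Matrix m E ℝ) :
    ((Fintype.card m).factorial : ℝ) * (A * A.transpose).det =
      ∑ f : m → E, (A.submatrix id f).det ^ 2 := by
  have h1 : (A * A.transpose).det =
      ∑ f : m → E, (∏ i, A i (f i)) * (A.submatrix id f).det := by
    simp only [Matrix.det_apply', Matrix.mul_apply, Matrix.transpose_apply, Finset.prod_univ_sum,
      Finset.mul_sum, Fintype.piFinset_univ, Matrix.submatrix_apply, id]
    rw [Finset.sum_comm]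
    refine Finset.sum_congr rfl fun f _ => Finset.sum_congr rfl fun σ _ => ?_
    rw [Finset.prod_mul_distrib]
    ring
  have h2 : ∀ σ : Equiv.Perm m, ∑ f : m → E,
      ((Equiv.Perm.sign σ : ℤ) : ℝ) * (∏ i, A (σ i) (f i)) * (A.submatrix id f).det =
      (A * A.transpose).det := by
    intro σ
    rw [h1]
    symm
    refine Fintype.sum_equiv (σ.symm.arrowCongr (Equiv.refl E)) _ _ fun f => ?_
    have hA : A.submatrix id (σ.symm.arrowCongr (Equiv.refl E) f) =
        (A.submatrix id f).submatrix id σ := by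
      ext i j
      simp [Equiv.arrowCongr]
    rw [hA, Matrix.det_permute']
    have hp : ∏ i, A (σ i) (σ.symm.arrowCongr (Equiv.refl E) f i) = ∏ i, A i (f i) := by
      simpa [Equiv.arrowCongr] using Equiv.prod_comp σ (fun i => A i (f i))
    rw [hp]
    have hs : (((Equiv.Perm.sign σ : ℤ) : ℝ)) * ((Equiv.Perm.sign σ : ℤ) : ℝ) = 1 := by
      rw [← Int.cast_mul, ← Units.val_mul, Int.units_mul_self]
      simp
    linear_combination (-(∏ i, A i (f i)) * (A.submatrix id f).det) * hs
  calc ((Fintype.card m).factorial : ℝ) * (A * A.transpose).det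
      = ∑ σ : Equiv.Perm m, (A * A.transpose).det := by
        simp [Fintype.card_perm]
    _ = ∑ σ : Equiv.Perm m, ∑ f : m → E,
      ((Equiv.Perm.sign σ : ℤ) : ℝ) * (∏ i, A (σ i) (f i)) * (A.submatrix id f).det :=
        Finset.sum_congr rfl fun σ _ => (h2 σ).symm
    _ = _ := by
        rw [Finset.sum_comm]
        refine Finset.sum_congr rfl fun f _ => ?_
        rw [← Finset.sum_mul, sq]
        congr 1
        rw [Matrix.det_apply']
        rfl

theorem vecMul_incMatrix {V E m : Type} [Fintype m] (ends : E → V × V) (f : V → Option m)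
    (x : m → ℝ) (e : E) :
    Matrix.vecMul x (incMatrix ends f) e =
      (f (ends e).1).elim 0 x - (f (ends e).2).elim 0 x := by
  have key : ∀ o : Option m, ∑ w, x w * ind o (some w) = o.elim 0 x := by
    intro o
    cases o <;> simp [ind]
  simp only [Matrix.vecMul, dotProduct, incMatrix, Matrix.of_apply, mul_sub,
    Finset.sum_sub_distrib, key]

/-- A vertex potential vanishing at the root and constant along a set of edges that reaches
every vertex is zero. -/
theorem potential_eq_zero {V E m : Type} {ends : E → V × V} {f : V → Option m} {T : Set E}
    (hf : Function.Surjective f)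
    (hT : ∀ u v : V, Relation.ReflTransGen
      (fun x y => ∃ e ∈ T, ends e = (x, y) ∨ ends e = (y, x)) u v)
    {x : m → ℝ} (hx : ∀ e ∈ T, (f (ends e).1).elim 0 x - (f (ends e).2).elim 0 x = 0) :
    x = 0 := by
  obtain ⟨r, hr⟩ := hf none
  have key : ∀ v, (f v).elim 0 x = 0 := by
    intro v
    induction hT r v with
    | refl => simp [hr]
    | tail _ h ih =>
      obtain ⟨e, he, h | h⟩ := h
      · have := hx e he
        rw [h] at this
        simp only at this
        linarith
      · have := hx e he
        rw [h] at this
        simp only at this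
        linarith
  ext w
  obtain ⟨v, hv⟩ := hf (some w)
  simpa [hv] using key v

theorem incMatrix_submatrix {V E m k : Type} (ends : E → V × V) (f : V → Option m) (g : k → E) :
    (incMatrix ends f).submatrix id g = incMatrix (ends ∘ g) f := rfl

/-- The maximal minor of the reduced incidence matrix on a family of edges is nonzero exactly when
these edges form a spanning tree. -/
theorem det_incMatrix_ne_zero_iff (H : WMG) {m : Type} [Fintype m] [DecidableEq m]
    {φ : H.V → Option m} (hφ : Function.Bijective φ) (g : m → H.E) :
    (incMatrix (H.ends ∘ g) φ).det ≠ 0 ↔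
      Function.Injective g ∧ H.IsSpanningTree (Finset.univ.image g) := by
  have hcard : Fintype.card H.V - 1 = Fintype.card m := by
    rw [Fintype.card_of_bijective hφ, Fintype.card_option, Nat.add_sub_cancel]
  constructor
  · intro hdet
    have hinj : Function.Injective g := by
      intro i j hij
      by_contra hne
      exact hdet (Matrix.det_zero_of_column_eq hne fun w => by simp [incMatrix, hij])
    refine ⟨hinj, ?_, by rw [Finset.card_image_of_injective _ hinj, hcard, Finset.card_univ]⟩
    obtain ⟨r, hr⟩ := hφ.surjective none
    set R : H.V → H.V → Prop := fun x y =>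
      ∃ e ∈ Finset.univ.image g, H.ends e = (x, y) ∨ H.ends e = (y, x) with hR
    have hsymm : ∀ x y, R x y → R y x := fun x y ⟨e, he, h⟩ => ⟨e, he, h.symm⟩
    have hreach : ∀ v, Relation.ReflTransGen R r v := by
      let z : H.V → ℝ := fun v => if Relation.ReflTransGen R r v then 0 else 1
      let ψ := Equiv.ofBijective φ hφ
      let x : m → ℝ := fun w => z (ψ.symm (some w))
      have hxz : ∀ v, (φ v).elim 0 x = z v := by
        intro v
        cases hv : φ v with
        | none =>
          have : v = r := hφ.injective (hv.trans hr.symm)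
          subst this
          simp [z, Relation.ReflTransGen.refl]
        | some w =>
          have : ψ.symm (some w) = v := by rw [Equiv.symm_apply_eq]; exact hv.symm
          simp [x, this]
      have hx : x = 0 := by
        by_contra hne
        refine hdet (Matrix.exists_vecMul_eq_zero_iff.mp ⟨x, hne, ?_⟩)
        ext i
        rw [vecMul_incMatrix, hxz, hxz]
        have h12 : R (H.ends (g i)).1 (H.ends (g i)).2 := ⟨g i, by simp, Or.inl rfl⟩
        have hiff : Relation.ReflTransGen R r (H.ends (g i)).1 ↔
            Relation.ReflTransGen R r (H.ends (g i)).2 :=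
          ⟨fun h => h.tail h12, fun h => h.tail (hsymm _ _ h12)⟩
        simp [z, hiff]
      intro v
      have hv := hxz v
      by_contra hnot
      have hz : z v = 1 := if_neg hnot
      rw [hz, hx] at hv
      cases hv' : φ v <;> simp [hv'] at hv
    intro u v
    have : Std.Symm R := ⟨hsymm⟩
    exact (Std.Symm.symm _ _ (hreach u)).trans (hreach v)
  · rintro ⟨-, hT, -⟩ hdet
    obtain ⟨x, hne, hx⟩ := Matrix.exists_vecMul_eq_zero_iff.mpr hdet
    refine hne (potential_eq_zero (T := {e | e ∈ Finset.univ.image g}) hφ.surjective hT ?_)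
    intro e he
    obtain ⟨i, -, rfl⟩ := Finset.mem_image.mp he
    simpa [vecMul_incMatrix] using congrFun hx i

/-- Each spanning tree is the image of exactly `(|V| - 1)!` enumerations of its edges. -/
theorem card_injective_image_isSpanningTree (H : WMG) {m : Type} [Fintype m]
    {φ : H.V → Option m} (hφ : Function.Bijective φ) :
    Nat.card {g : m → H.E // Function.Injective g ∧ H.IsSpanningTree (Finset.univ.image g)} =
      (Fintype.card m).factorial * H.t := by
  have hcard : Fintype.card H.V - 1 = Fintype.card m := by
    rw [Fintype.card_of_bijective hφ, Fintype.card_option, Nat.add_sub_cancel]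
  have hF : ∀ (T : Finset H.E) (e : m ≃ T),
      Finset.univ.image (fun i => (e i : H.E)) = T := by
    intro T e
    ext y
    simp only [Finset.mem_image, Finset.mem_univ, true_and]
    exact ⟨fun ⟨i, hi⟩ => hi ▸ (e i).2, fun hy => ⟨e.symm ⟨y, hy⟩, by simp⟩⟩
  let F : (Σ T : {T : Finset H.E // H.IsSpanningTree T}, m ≃ T.1) →
      {g : m → H.E // Function.Injective g ∧ H.IsSpanningTree (Finset.univ.image g)} :=
    fun p => ⟨fun i => (p.2 i : H.E), Subtype.val_injective.comp p.2.injective, by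
      rw [hF]; exact p.1.2⟩
  have hbij : Function.Bijective F := by
    constructor
    · rintro ⟨⟨T, hT⟩, e⟩ ⟨⟨T', hT'⟩, e'⟩ h
      have hfun : (fun i => (e i : H.E)) = fun i => (e' i : H.E) := congrArg Subtype.val h
      have hTT : T = T' := by rw [← hF T e, ← hF T' e', hfun]
      subst hTT
      have : e = e' := by
        ext i
        exact congrFun hfun i
      rw [this]
    · rintro ⟨g, hg, hT⟩
      refine ⟨⟨⟨_, hT⟩, Equiv.ofBijective (fun i => ⟨g i, by simp⟩) ⟨?_, ?_⟩⟩, rfl⟩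
      · intro i j hij
        exact hg (congrArg Subtype.val hij)
      · rintro ⟨y, hy⟩
        obtain ⟨i, -, rfl⟩ := Finset.mem_image.mp hy
        exact ⟨i, rfl⟩
  rw [← Nat.card_congr (Equiv.ofBijective F hbij), Nat.card_sigma]
  have hc : ∀ T : {T : Finset H.E // H.IsSpanningTree T},
      Nat.card (m ≃ T.1) = (Fintype.card m).factorial := by
    rintro ⟨T, hT⟩
    have hTm : Fintype.card m = Fintype.card T := by rw [Fintype.card_coe, hT.2, hcard]
    rw [Nat.card_eq_fintype_card, Fintype.card_equiv (Fintype.equivOfCardEq hTm)]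
  simp only [hc, Finset.sum_const, smul_eq_mul, Finset.card_univ, t, Nat.card_eq_fintype_card]
  ring

/-- Kirchhoff's matrix-tree theorem. -/
theorem t_eq_det_s16 (H : WMG) {m : Type} [Fintype m] [DecidableEq m]
    {φ : H.V → Option m} (hφ : Function.Bijective φ) :
    (H.t : ℝ) = (incMatrix H.ends φ * (incMatrix H.ends φ).transpose).det := by
  have hne : ((Fintype.card m).factorial : ℝ) ≠ 0 := by
    exact_mod_cast Nat.factorial_ne_zero _
  refine mul_left_cancel₀ hne ?_
  rw [factorial_mul_det_mul_transpose]
  have hterm : ∀ g : m → H.E, ((incMatrix H.ends φ).submatrix id g).det ^ 2 =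
      if Function.Injective g ∧ H.IsSpanningTree (Finset.univ.image g) then 1 else 0 := by
    intro g
    rw [incMatrix_submatrix]
    have h := det_incMatrix_ne_zero_iff H hφ g
    split_ifs with hg
    · rcases sq_det_incMatrix (H.ends ∘ g) φ with h0 | h1
      · exact absurd (pow_eq_zero_iff two_ne_zero |>.mp h0) (h.mpr hg)
      · exact h1
    · rw [not_not.mp (mt h.mp hg)]
      simp
  simp only [hterm, Finset.sum_boole]
  rw [← Nat.cast_mul, ← card_injective_image_isSpanningTree H hφ, Nat.card_eq_fintype_card,
    Fintype.card_subtype]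

/-- The matrix-tree theorem for a quotient graph, in terms of a labelling of the vertices of the
original graph by their classes. -/
theorem t_quot_eq_det (G : WMG) (r : G.V → G.V → Prop) {m : Type} [Fintype m] [DecidableEq m]
    {f : G.V → Option m} (hf : Function.Surjective f) (hr : ∀ x y, r x y → f x = f y)
    (hinj : ∀ x y, f x = f y → Quot.mk r x = Quot.mk r y) :
    ((G.quot r).t : ℝ) = (incMatrix G.ends f * (incMatrix G.ends f).transpose).det := by
  refine t_eq_det_s16 (G.quot r) (φ := Quot.lift f hr) ⟨?_, ?_⟩
  · rintro ⟨x⟩ ⟨y⟩ h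
    exact hinj x y h
  · intro o
    obtain ⟨x, hx⟩ := hf o
    exact ⟨Quot.mk r x, hx⟩

/-- The Laplacian of the underlying multigraph, all edges having weight one. -/
noncomputable def unitLap (G : WMG) : Matrix G.V G.V ℝ :=
  Matrix.of fun u v => ∑ e, (ind (G.ends e).1 u - ind (G.ends e).2 u) *
    (ind (G.ends e).1 v - ind (G.ends e).2 v)

theorem unitLap_comm (G : WMG) (u v : G.V) : G.unitLap u v = G.unitLap v u := by
  simp only [unitLap, Matrix.of_apply, mul_comm]

theorem sum_unitLap (G : WMG) (u : G.V) : ∑ v, G.unitLap u v = 0 := by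
  simp only [unitLap, Matrix.of_apply]
  rw [Finset.sum_comm]
  simp [← Finset.mul_sum, Finset.sum_sub_distrib, ind]

theorem ind_partialInv {V m : Type} {j : m → V} (hj : Function.Injective j) (v : V) (w : m) :
    ind (Function.partialInv j v) (some w) = ind v (j w) :=
  ind_congr ((hj.isPartialInv w v).trans eq_comm)

theorem incMatrix_partialInv_apply {V E m : Type} (ends : E → V × V) {j : m → V}
    (hj : Function.Injective j) (w : m) (e : E) :
    incMatrix ends (Function.partialInv j) w e = ind (ends e).1 (j w) - ind (ends e).2 (j w) := by
  simp only [incMatrix, Matrix.of_apply, ind_partialInv hj]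

theorem incMatrix_partialInv_mul_transpose (G : WMG) {m : Type} {j : m → G.V}
    (hj : Function.Injective j) :
    incMatrix G.ends (Function.partialInv j) * (incMatrix G.ends (Function.partialInv j)).transpose
      = G.unitLap.submatrix j j := by
  ext w w'
  simp [Matrix.mul_apply, incMatrix_partialInv_apply _ hj, unitLap]

theorem partialInv_eq_none {V m : Type} {j : m → V} (hj : Function.Injective j) {v : V} :
    Function.partialInv j v = none ↔ v ∉ Set.range j := by
  rw [← not_iff_not, ← ne_eq, Option.ne_none_iff_exists', not_not]
  exact exists_congr fun w => hj.isPartialInv w v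

theorem partialInv_surjective {V m : Type} {j : m → V} (hj : Function.Injective j)
    (h : ∃ v, v ∉ Set.range j) : Function.Surjective (Function.partialInv j) := by
  rintro (_ | w)
  · obtain ⟨v, hv⟩ := h
    exact ⟨v, (partialInv_eq_none hj).mpr hv⟩
  · exact ⟨j w, Function.partialInv_left hj w⟩

theorem partialInv_inj {V m : Type} {j : m → V} (hj : Function.Injective j) {r : V}
    (hr : ∀ v, Function.partialInv j v = none → v = r) {x y : V}
    (h : Function.partialInv j x = Function.partialInv j y) : x = y := by
  cases hx : Function.partialInv j x with
  | none => rw [hr x hx, hr y (h ▸ hx)]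
  | some w => rw [← (hj.isPartialInv w x).mp hx, ← (hj.isPartialInv w y).mp (h ▸ hx)]

/-- If all vertices outside the range of `j` are merged into one, the spanning trees of the quotient
are counted by the principal minor of the Laplacian indexed by `j`. -/
theorem t_quot_eq_det_submatrix (G : WMG) (r : G.V → G.V → Prop) {m : Type} [Fintype m]
    [DecidableEq m] {j : m → G.V} (hj : Function.Injective j) (h : ∃ v, v ∉ Set.range j)
    (hr : ∀ x y, r x y → x ∉ Set.range j ∧ y ∉ Set.range j)
    (hq : ∀ x y, x ∉ Set.range j → y ∉ Set.range j → Quot.mk r x = Quot.mk r y) :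
    ((G.quot r).t : ℝ) = (G.unitLap.submatrix j j).det := by
  rw [← incMatrix_partialInv_mul_transpose G hj]
  refine t_quot_eq_det G r (partialInv_surjective hj h) ?_ ?_
  · intro x y hxy
    rw [(partialInv_eq_none hj).mpr (hr x y hxy).1, (partialInv_eq_none hj).mpr (hr x y hxy).2]
  · intro x y hxy
    cases hx : Function.partialInv j x with
    | none =>
      exact hq x y ((partialInv_eq_none hj).mp hx) ((partialInv_eq_none hj).mp (hxy ▸ hx))
    | some w =>
      rw [← (hj.isPartialInv w x).mp hx,
        ← (hj.isPartialInv w y).mp (hxy ▸ hx)]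

theorem t_eq_det_submatrix (G : WMG) {m : Type} [Fintype m] [DecidableEq m] {j : m → G.V}
    (hj : Function.Injective j) (h : ∃ v, v ∉ Set.range j)
    (hq : ∀ x y, x ∉ Set.range j → y ∉ Set.range j → x = y) :
    (G.t : ℝ) = (G.unitLap.submatrix j j).det := by
  rw [← incMatrix_partialInv_mul_transpose G hj]
  refine t_eq_det_s16 G ⟨?_, partialInv_surjective hj h⟩
  intro x y hxy
  cases hx : Function.partialInv j x with
  | none => exact hq x y ((partialInv_eq_none hj).mp hx) ((partialInv_eq_none hj).mp (hxy ▸ hx))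
  | some w =>
    rw [← (hj.isPartialInv w x).mp hx,
      ← (hj.isPartialInv w y).mp (hxy ▸ hx)]

/-- A proper principal minor of the Laplacian of a connected graph does not vanish. -/
theorem det_unitLap_submatrix_ne_zero {G : WMG} (hG : G.Connected) {m : Type} [Fintype m]
    [DecidableEq m] {j : m → G.V} (hj : Function.Injective j) (h : ∃ v, v ∉ Set.range j) :
    (G.unitLap.submatrix j j).det ≠ 0 := by
  rw [← incMatrix_partialInv_mul_transpose G hj]
  intro hdet
  obtain ⟨x, hne, hx⟩ := Matrix.exists_vecMul_eq_zero_iff.mpr hdet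
  set B := incMatrix G.ends (Function.partialInv j)
  have hx' : Matrix.vecMul x B = 0 := by
    rw [← Matrix.conjTranspose_eq_transpose_of_trivial] at hx
    exact (Matrix.vecMul_self_mul_conjTranspose_eq_zero B x).mp hx
  refine hne (potential_eq_zero (T := Set.univ) (partialInv_surjective hj h) (ends := G.ends)
    (fun u v => ?_) fun e _ => ?_)
  · refine Relation.ReflTransGen.mono ?_ _ _ (hG.2 u v)
    rintro a b ⟨e, he⟩
    exact ⟨e, trivial, he⟩
  · rw [← vecMul_incMatrix]
    exact congrFun hx' e

section Terminals

variable (G : WMG) (τ : Fin 3 → G.V)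

/-- The vertices indexed by `ι` among the terminals, followed by all non-terminal vertices. -/
def withInterior {k : Type} (ι : k → Fin 3) : k ⊕ {v // v ∉ Set.range τ} → G.V :=
  Sum.elim (τ ∘ ι) Subtype.val

/-- The Laplacian restricted to the non-terminal vertices. -/
noncomputable def interiorLap :
    Matrix {v // v ∉ Set.range τ} {v // v ∉ Set.range τ} ℝ :=
  G.unitLap.submatrix Subtype.val Subtype.val

/-- The block of the Laplacian with rows at the terminals and columns at the other vertices. -/
noncomputable def boundaryLap : Matrix (Fin 3) {v // v ∉ Set.range τ} ℝ :=
  G.unitLap.submatrix τ Subtype.val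

/-- The response matrix: the Schur complement of the non-terminal block of the Laplacian. -/
noncomputable def response : Matrix (Fin 3) (Fin 3) ℝ :=
  G.unitLap.submatrix τ τ - G.boundaryLap τ * (G.interiorLap τ)⁻¹ * (G.boundaryLap τ).transpose

variable {G τ}

theorem withInterior_injective (hτ : Function.Injective τ) {k : Type} {ι : k → Fin 3}
    (hι : Function.Injective ι) : Function.Injective (G.withInterior τ ι) := by
  refine Function.Injective.sumElim (hτ.comp hι) Subtype.val_injective ?_
  rintro a ⟨v, hv⟩ h
  exact hv ⟨_, h⟩

theorem notMem_range_withInterior (hτ : Function.Injective τ) {k : Type} {ι : k → Fin 3} {v : G.V} :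
    v ∉ Set.range (G.withInterior τ ι) ↔ ∃ c, c ∉ Set.range ι ∧ v = τ c := by
  constructor
  · intro h
    have hv : v ∈ Set.range τ := by
      by_contra hv
      exact h ⟨Sum.inr ⟨v, hv⟩, rfl⟩
    obtain ⟨c, rfl⟩ := hv
    refine ⟨c, ?_, rfl⟩
    rintro ⟨i, rfl⟩
    exact h ⟨Sum.inl i, rfl⟩
  · rintro ⟨c, hc, rfl⟩ ⟨i | i, hi⟩
    · exact hc ⟨i, hτ hi⟩
    · exact i.2 ⟨c, hi.symm⟩

theorem det_interiorLap_ne_zero (hG : G.Connected) : (G.interiorLap τ).det ≠ 0 :=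
  det_unitLap_submatrix_ne_zero hG Subtype.val_injective ⟨τ 0, by simp⟩

theorem det_unitLap_withInterior (hZ : (G.interiorLap τ).det ≠ 0) {k : Type} [Fintype k]
    [DecidableEq k] (ι : k → Fin 3) :
    (G.unitLap.submatrix (G.withInterior τ ι) (G.withInterior τ ι)).det =
      (G.interiorLap τ).det * ((G.response τ).submatrix ι ι).det := by
  have : Invertible (G.interiorLap τ) := Matrix.invertibleOfIsUnitDet _ (isUnit_iff_ne_zero.mpr hZ)
  have hb : G.unitLap.submatrix (G.withInterior τ ι) (G.withInterior τ ι) =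
      Matrix.fromBlocks (G.unitLap.submatrix (τ ∘ ι) (τ ∘ ι)) ((G.boundaryLap τ).submatrix ι id)
        ((G.boundaryLap τ).submatrix ι id).transpose (G.interiorLap τ) := by
    ext (i | i) (j | j)
    · rfl
    · rfl
    · exact G.unitLap_comm _ _
    · rfl
  rw [hb, Matrix.det_fromBlocks₂₂, Matrix.invOf_eq_nonsing_inv]
  congr 2

theorem interiorLap_isSymm : (G.interiorLap τ).IsSymm := by
  ext u v
  exact G.unitLap_comm _ _

theorem response_isSymm : (G.response τ).IsSymm := by
  have h1 : (G.unitLap.submatrix τ τ).transpose = G.unitLap.submatrix τ τ := by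
    ext u v
    exact G.unitLap_comm _ _
  rw [Matrix.IsSymm, response, Matrix.transpose_sub, Matrix.transpose_mul, Matrix.transpose_mul, h1,
    Matrix.transpose_nonsing_inv, interiorLap_isSymm, Matrix.transpose_transpose, Matrix.mul_assoc]

theorem sum_terminals_add_sum_interior (hτ : Function.Injective τ) (g : G.V → ℝ) :
    ∑ c, g (τ c) + ∑ v : {v // v ∉ Set.range τ}, g v = ∑ v, g v := by
  rw [← Fintype.sum_subtype_add_sum_subtype (· ∈ Set.range τ) g]
  congr 1
  convert Fintype.sum_equiv (Equiv.ofInjective τ hτ) (fun c => g (τ c))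
    (fun v : Set.range τ => g v) fun _ => rfl

theorem response_mulVec_one (hτ : Function.Injective τ) (hZ : (G.interiorLap τ).det ≠ 0) :
    (G.response τ).mulVec (fun _ => 1) = 0 := by
  have hrow : ∀ u, (∑ c, G.unitLap u (τ c)) = -∑ v : {v // v ∉ Set.range τ}, G.unitLap u v :=
    fun u => eq_neg_of_add_eq_zero_left
      ((sum_terminals_add_sum_interior hτ _).trans (G.sum_unitLap u))
  have h1 : (G.boundaryLap τ).transpose.mulVec (fun _ => 1) =
      -(G.interiorLap τ).mulVec (fun _ => 1) := by
    ext u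
    simpa [Matrix.mulVec, dotProduct, interiorLap, boundaryLap, unitLap_comm] using hrow u
  have h2 : (G.unitLap.submatrix τ τ).mulVec (fun _ => 1) =
      -(G.boundaryLap τ).mulVec (fun _ => 1) := by
    ext u
    simpa [Matrix.mulVec, dotProduct, boundaryLap] using hrow (τ u)
  rw [response, Matrix.sub_mulVec, ← Matrix.mulVec_mulVec, h1, ← Matrix.mulVec_mulVec,
    Matrix.mulVec_neg, Matrix.mulVec_mulVec, Matrix.nonsing_inv_mul _ (isUnit_iff_ne_zero.mpr hZ),
    Matrix.one_mulVec, h2, Matrix.mulVec_neg, sub_self]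

end Terminals

section Terminals

variable {G : WMG} {p q s : G.V}

theorem injective_terminals (hpq : p ≠ q) (hps : p ≠ s) (hqs : q ≠ s) :
    Function.Injective ![p, q, s] := by
  intro a b h
  fin_cases a <;> fin_cases b <;> simp_all

theorem injective_const_fin_one (c : Fin 3) : Function.Injective ![c] :=
  Function.injective_of_subsingleton _

theorem injective_one_two : Function.Injective (![1, 2] : Fin 2 → Fin 3) := by
  decide

theorem det_response_submatrix_one_two (τ : Fin 3 → G.V) :
    ((G.response τ).submatrix ![1, 2] ![1, 2]).det =
      G.response τ 1 1 * G.response τ 2 2 - G.response τ 1 2 ^ 2 := by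
  have h : G.response τ 2 1 = G.response τ 1 2 := response_isSymm.apply 1 2
  rw [Matrix.det_fin_two]
  simp [h, sq]

theorem response_zero_zero {τ : Fin 3 → G.V} (hτ : Function.Injective τ) (hG : G.Connected) :
    G.response τ 0 0 = G.response τ 1 1 + G.response τ 2 2 + 2 * G.response τ 1 2 := by
  have h := response_mulVec_one hτ (det_interiorLap_ne_zero hG)
  have h0 := congrFun h 0
  have h1 := congrFun h 1
  have h2 := congrFun h 2
  have s1 : G.response τ 0 1 = G.response τ 1 0 := response_isSymm.apply 1 0
  have s2 : G.response τ 0 2 = G.response τ 2 0 := response_isSymm.apply 2 0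
  have s3 : G.response τ 2 1 = G.response τ 1 2 := response_isSymm.apply 1 2
  simp only [Matrix.mulVec, dotProduct, Fin.sum_univ_three, mul_one, Pi.zero_apply] at h0 h1 h2
  linarith

theorem notMem_range_withInterior_one_two (hτ : Function.Injective ![p, q, s]) {v : G.V} :
    v ∉ Set.range (G.withInterior ![p, q, s] ![1, 2]) ↔ v = p := by
  rw [notMem_range_withInterior hτ]
  constructor
  · rintro ⟨c, hc, rfl⟩
    have hc0 : ∀ c : Fin 3, c ∉ Set.range (![1, 2] : Fin 2 → Fin 3) → c = 0 := by decide
    rw [hc0 c hc]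
    rfl
  · rintro rfl
    exact ⟨0, by decide, rfl⟩

theorem t_eq_det_response (hτ : Function.Injective ![p, q, s]) (hG : G.Connected) :
    (G.t : ℝ) = (G.interiorLap ![p, q, s]).det *
      (G.response ![p, q, s] 1 1 * G.response ![p, q, s] 2 2 - G.response ![p, q, s] 1 2 ^ 2) := by
  rw [← det_response_submatrix_one_two, ← det_unitLap_withInterior (det_interiorLap_ne_zero hG)]
  refine t_eq_det_submatrix G (withInterior_injective hτ injective_one_two)
    ⟨p, (notMem_range_withInterior_one_two hτ).mpr rfl⟩ fun x y hx hy => ?_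
  rw [(notMem_range_withInterior_one_two hτ).mp hx, (notMem_range_withInterior_one_two hτ).mp hy]

theorem t_ident3_eq_det (hτ : Function.Injective ![p, q, s]) (hG : G.Connected) :
    ((G.ident3 p q s).t : ℝ) = (G.interiorLap ![p, q, s]).det := by
  have h := det_unitLap_withInterior (G := G) (τ := ![p, q, s]) (det_interiorLap_ne_zero hG)
    (![] : Fin 0 → Fin 3)
  rw [Matrix.det_isEmpty (A := (G.response _).submatrix _ _), mul_one] at h
  rw [← h]
  refine t_quot_eq_det_submatrix G _ (withInterior_injective hτ (Function.injective_of_subsingleton _))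
    ⟨p, (notMem_range_withInterior hτ).mpr ⟨0, by simp, rfl⟩⟩ ?_ ?_
  · rintro x y (⟨rfl, rfl⟩ | ⟨rfl, rfl⟩)
    · exact ⟨(notMem_range_withInterior hτ).mpr ⟨0, by simp, rfl⟩,
        (notMem_range_withInterior hτ).mpr ⟨1, by simp, rfl⟩⟩
    · exact ⟨(notMem_range_withInterior hτ).mpr ⟨0, by simp, rfl⟩,
        (notMem_range_withInterior hτ).mpr ⟨2, by simp, rfl⟩⟩
  · have key : ∀ x, x ∉ Set.range (G.withInterior ![p, q, s] ![]) →
        Quot.mk (fun x y => (x = p ∧ y = q) ∨ (x = p ∧ y = s)) x = Quot.mk _ p := by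
      intro x hx
      obtain ⟨c, -, rfl⟩ := (notMem_range_withInterior hτ).mp hx
      symm
      fin_cases c
      · rfl
      · exact Quot.sound (Or.inl ⟨rfl, rfl⟩)
      · exact Quot.sound (Or.inr ⟨rfl, rfl⟩)
    intro x y hx hy
    rw [key x hx, key y hy]

/-- Identifying two terminals `τ a`, `τ b` leaves the diagonal entry of the response matrix at the
third terminal. -/
theorem t_ident2_eq_det {τ : Fin 3 → G.V} (hτ : Function.Injective τ) (hG : G.Connected)
    (a b c : Fin 3) (hac : a ≠ c) (hbc : b ≠ c) (hab : a ≠ b) :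
    ((G.ident2 (τ a) (τ b)).t : ℝ) = (G.interiorLap τ).det * G.response τ c c := by
  have h := det_unitLap_withInterior (G := G) (τ := τ) (det_interiorLap_ne_zero hG) ![c]
  rw [Matrix.det_unique ((G.response τ).submatrix _ _)] at h
  have hn : ∀ d, d ≠ c → τ d ∉ Set.range (G.withInterior τ ![c]) := fun d hd =>
    (notMem_range_withInterior hτ).mpr ⟨d, fun ⟨_, h⟩ => hd (by simpa using h.symm), rfl⟩
  refine (t_quot_eq_det_submatrix G _ (withInterior_injective hτ (injective_const_fin_one c))
    ⟨τ a, hn a hac⟩ ?_ ?_).trans h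
  · rintro x y ⟨rfl, rfl⟩
    exact ⟨hn a hac, hn b hbc⟩
  · have key : ∀ x, x ∉ Set.range (G.withInterior τ ![c]) →
        Quot.mk (fun x y => x = τ a ∧ y = τ b) x = Quot.mk _ (τ a) := by
      intro x hx
      obtain ⟨d, hd, rfl⟩ := (notMem_range_withInterior hτ).mp hx
      have hdc : d ≠ c := fun h => hd ⟨0, h.symm⟩
      have hd' : d = a ∨ d = b := by omega
      rcases hd' with rfl | rfl
      · rfl
      · exact (Quot.sound ⟨rfl, rfl⟩).symm
    intro x y hx hy
    rw [key x hx, key y hy]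

end Terminals

section Glue

variable {G₁ G₂ : WMG}

theorem ind_map {α β : Type} {g : α → β} (hg : Function.Injective g) (o : Option α) (u : α) :
    ind (o.map g) (some (g u)) = ind o (some u) := by
  refine ind_congr ?_
  rw [← Option.map_some, (Option.map_injective hg).eq_iff]

theorem ind_map_of_notMem_range {α β : Type} {g : α → β} (o : Option α) {w : β}
    (hw : w ∉ Set.range g) : ind (o.map g) (some w) = 0 := by
  refine ind_of_ne ?_
  rw [ne_eq, Option.map_eq_some_iff]
  rintro ⟨u, -, hu⟩
  exact hw ⟨u, hu⟩

/-- The embedding of the labels of the first graph into the labels of a glued graph. -/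
def glueInl (k I₁ I₂ : Type) : k ⊕ I₁ → k ⊕ (I₁ ⊕ I₂) := Sum.map id Sum.inl

/-- The embedding of the labels of the second graph into the labels of a glued graph. -/
def glueInr (k I₁ I₂ : Type) : k ⊕ I₂ → k ⊕ (I₁ ⊕ I₂) := Sum.map id Sum.inr

theorem glueInl_injective (k I₁ I₂ : Type) : Function.Injective (glueInl k I₁ I₂) :=
  Function.Injective.sumMap Function.injective_id Sum.inl_injective

theorem glueInr_injective (k I₁ I₂ : Type) : Function.Injective (glueInr k I₁ I₂) :=
  Function.Injective.sumMap Function.injective_id Sum.inr_injective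

theorem inr_inr_notMem_range_glueInl {k I₁ I₂ : Type} (i : I₂) :
    Sum.inr (Sum.inr i) ∉ Set.range (glueInl k I₁ I₂) := by
  rintro ⟨a | a, h⟩ <;> simp [glueInl] at h

theorem inr_inl_notMem_range_glueInr {k I₁ I₂ : Type} (i : I₁) :
    Sum.inr (Sum.inl i) ∉ Set.range (glueInr k I₁ I₂) := by
  rintro ⟨a | a, h⟩ <;> simp [glueInr] at h

/-- Labelling of the vertices of a disjoint union by the classes obtained on gluing: matching
vertices indexed by `k` share a label, and the remaining unlabelled vertices form the root. -/
noncomputable def glueLabel {k I₁ I₂ : Type} (j₁ : k ⊕ I₁ → G₁.V) (j₂ : k ⊕ I₂ → G₂.V) :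
    (G₁.disjUnion G₂).V → Option (k ⊕ (I₁ ⊕ I₂)) :=
  Sum.elim (fun v => (Function.partialInv j₁ v).map (glueInl k I₁ I₂))
    (fun v => (Function.partialInv j₂ v).map (glueInr k I₁ I₂))

theorem incMatrix_glueLabel_mul_transpose {k I₁ I₂ : Type} {j₁ : k ⊕ I₁ → G₁.V}
    {j₂ : k ⊕ I₂ → G₂.V} (h₁ : Function.Injective j₁) (h₂ : Function.Injective j₂) :
    incMatrix (G₁.disjUnion G₂).ends (glueLabel j₁ j₂) *
      (incMatrix (G₁.disjUnion G₂).ends (glueLabel j₁ j₂)).transpose =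
    Matrix.fromBlocks
      (G₁.unitLap.submatrix (j₁ ∘ Sum.inl) (j₁ ∘ Sum.inl) +
        G₂.unitLap.submatrix (j₂ ∘ Sum.inl) (j₂ ∘ Sum.inl))
      (Matrix.fromCols (G₁.unitLap.submatrix (j₁ ∘ Sum.inl) (j₁ ∘ Sum.inr))
        (G₂.unitLap.submatrix (j₂ ∘ Sum.inl) (j₂ ∘ Sum.inr)))
      (Matrix.fromRows (G₁.unitLap.submatrix (j₁ ∘ Sum.inr) (j₁ ∘ Sum.inl))
        (G₂.unitLap.submatrix (j₂ ∘ Sum.inr) (j₂ ∘ Sum.inl)))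
      (Matrix.fromBlocks (G₁.unitLap.submatrix (j₁ ∘ Sum.inr) (j₁ ∘ Sum.inr)) 0 0
        (G₂.unitLap.submatrix (j₂ ∘ Sum.inr) (j₂ ∘ Sum.inr))) := by
  set B := incMatrix (G₁.disjUnion G₂).ends (glueLabel j₁ j₂) with hB
  have l₁ : ∀ u (e : G₁.E), B (glueInl k I₁ I₂ u) (Sum.inl e) =
      ind (G₁.ends e).1 (j₁ u) - ind (G₁.ends e).2 (j₁ u) := by
    intro u e
    rw [← ind_partialInv h₁, ← ind_partialInv h₁, ← ind_map (glueInl_injective k I₁ I₂),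
      ← ind_map (glueInl_injective k I₁ I₂) (Function.partialInv j₁ (G₁.ends e).2)]
    rfl
  have l₂ : ∀ u (e : G₂.E), B (glueInr k I₁ I₂ u) (Sum.inr e) =
      ind (G₂.ends e).1 (j₂ u) - ind (G₂.ends e).2 (j₂ u) := by
    intro u e
    rw [← ind_partialInv h₂, ← ind_partialInv h₂, ← ind_map (glueInr_injective k I₁ I₂),
      ← ind_map (glueInr_injective k I₁ I₂) (Function.partialInv j₂ (G₂.ends e).2)]
    rfl
  have z₁ : ∀ i (e : G₁.E), B (Sum.inr (Sum.inr i)) (Sum.inl e) = 0 := by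
    intro i e
    have h := fun o => ind_map_of_notMem_range o (inr_inr_notMem_range_glueInl (I₁ := I₁) (k := k) i)
    exact (congrArg₂ (· - ·) (h _) (h _)).trans (sub_zero 0)
  have z₂ : ∀ i (e : G₂.E), B (Sum.inr (Sum.inl i)) (Sum.inr e) = 0 := by
    intro i e
    have h := fun o => ind_map_of_notMem_range o (inr_inl_notMem_range_glueInr (I₂ := I₂) (k := k) i)
    exact (congrArg₂ (· - ·) (h _) (h _)).trans (sub_zero 0)
  have a₁ : ∀ c (e : G₁.E), B (Sum.inl c) (Sum.inl e) = _ := fun c e => l₁ (Sum.inl c) e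
  have a₂ : ∀ c (e : G₂.E), B (Sum.inl c) (Sum.inr e) = _ := fun c e => l₂ (Sum.inl c) e
  have b₁ : ∀ i (e : G₁.E), B (Sum.inr (Sum.inl i)) (Sum.inl e) = _ := fun i e => l₁ (Sum.inr i) e
  have b₂ : ∀ i (e : G₂.E), B (Sum.inr (Sum.inr i)) (Sum.inr e) = _ := fun i e => l₂ (Sum.inr i) e
  have hsum : ∀ h : (G₁.disjUnion G₂).E → ℝ,
      ∑ e, h e = ∑ e, h (Sum.inl e) + ∑ e, h (Sum.inr e) := fun h => Fintype.sum_sum_type h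
  ext (c | i | i) (d | j | j) <;>
    simp [Matrix.mul_apply, hsum, a₁, a₂, b₁, b₂, z₁, z₂, unitLap]

theorem det_glueLabel {τ₁ : Fin 3 → G₁.V} {τ₂ : Fin 3 → G₂.V} (hτ₁ : Function.Injective τ₁)
    (hτ₂ : Function.Injective τ₂) (h₁ : (G₁.interiorLap τ₁).det ≠ 0)
    (h₂ : (G₂.interiorLap τ₂).det ≠ 0) {k : Type} [Fintype k] [DecidableEq k] {ι : k → Fin 3}
    (hι : Function.Injective ι) :
    (incMatrix (G₁.disjUnion G₂).ends (glueLabel (G₁.withInterior τ₁ ι) (G₂.withInterior τ₂ ι)) *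
      (incMatrix (G₁.disjUnion G₂).ends
        (glueLabel (G₁.withInterior τ₁ ι) (G₂.withInterior τ₂ ι))).transpose).det =
    (G₁.interiorLap τ₁).det * (G₂.interiorLap τ₂).det *
      ((G₁.response τ₁ + G₂.response τ₂).submatrix ι ι).det := by
  have hb : ∀ (G : WMG) (τ : Fin 3 → G.V), G.unitLap.submatrix (G.withInterior τ ι ∘ Sum.inr)
      (G.withInterior τ ι ∘ Sum.inl) = ((G.boundaryLap τ).submatrix ι id).transpose := by
    intro G τ
    ext i c
    exact G.unitLap_comm _ _
  rw [incMatrix_glueLabel_mul_transpose (withInterior_injective hτ₁ hι)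
    (withInterior_injective hτ₂ hι), hb, hb]
  change (Matrix.fromBlocks _ (Matrix.fromCols ((G₁.boundaryLap τ₁).submatrix ι id)
    ((G₂.boundaryLap τ₂).submatrix ι id)) _
    (Matrix.fromBlocks (G₁.interiorLap τ₁) 0 0 (G₂.interiorLap τ₂))).det = _
  have hinv : Matrix.fromBlocks (G₁.interiorLap τ₁) 0 0 (G₂.interiorLap τ₂) *
      Matrix.fromBlocks (G₁.interiorLap τ₁)⁻¹ 0 0 (G₂.interiorLap τ₂)⁻¹ = 1 := by
    rw [Matrix.fromBlocks_multiply]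
    simp [Matrix.mul_nonsing_inv _ (isUnit_iff_ne_zero.mpr h₁),
      Matrix.mul_nonsing_inv _ (isUnit_iff_ne_zero.mpr h₂)]
  let _ : Invertible (Matrix.fromBlocks (G₁.interiorLap τ₁) 0 0 (G₂.interiorLap τ₂)) :=
    invertibleOfRightInverse _ _ hinv
  rw [Matrix.det_fromBlocks₂₂, Matrix.invOf_eq_nonsing_inv, Matrix.inv_eq_right_inv hinv,
    Matrix.det_fromBlocks_zero₂₁, Matrix.fromCols_mul_fromBlocks, Matrix.fromCols_mul_fromRows]
  congr 2
  simp only [Matrix.mul_zero, add_zero, zero_add]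
  ext c d
  simp only [response, Matrix.sub_apply, Matrix.add_apply, Matrix.submatrix_apply]
  rw [sub_add_sub_comm]
  rfl

theorem t_glue3_eq_det (G₁ G₂ : WMG) {p₁ q₁ s₁ : G₁.V} {p₂ q₂ s₂ : G₂.V} (hG₁ : G₁.Connected)
    (hG₂ : G₂.Connected) (hτ₁ : Function.Injective ![p₁, q₁, s₁])
    (hτ₂ : Function.Injective ![p₂, q₂, s₂]) :
    ((G₁.glue3 G₂ p₁ q₁ s₁ p₂ q₂ s₂).t : ℝ) =
      (G₁.interiorLap ![p₁, q₁, s₁]).det * (G₂.interiorLap ![p₂, q₂, s₂]).det *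
      ((G₁.response ![p₁, q₁, s₁] + G₂.response ![p₂, q₂, s₂]).submatrix ![1, 2] ![1, 2]).det := by
  rw [← det_glueLabel hτ₁ hτ₂ (det_interiorLap_ne_zero hG₁) (det_interiorLap_ne_zero hG₂)
    injective_one_two]
  have i₁ := withInterior_injective hτ₁ injective_one_two
  have i₂ := withInterior_injective hτ₂ injective_one_two
  set j₁ := G₁.withInterior ![p₁, q₁, s₁] ![1, 2]
  set j₂ := G₂.withInterior ![p₂, q₂, s₂] ![1, 2]
  have r₁ : ∀ v, Function.partialInv j₁ v = none ↔ v = p₁ := fun v =>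
    (partialInv_eq_none i₁).trans (notMem_range_withInterior_one_two hτ₁)
  have r₂ : ∀ v, Function.partialInv j₂ v = none ↔ v = p₂ := fun v =>
    (partialInv_eq_none i₂).trans (notMem_range_withInterior_one_two hτ₂)
  have q₁' : Function.partialInv j₁ q₁ = some (Sum.inl 0) := (i₁.isPartialInv _ _).mpr rfl
  have q₂' : Function.partialInv j₂ q₂ = some (Sum.inl 0) := (i₂.isPartialInv _ _).mpr rfl
  have s₁' : Function.partialInv j₁ s₁ = some (Sum.inl 1) := (i₁.isPartialInv _ _).mpr rfl
  have s₂' : Function.partialInv j₂ s₂ = some (Sum.inl 1) := (i₂.isPartialInv _ _).mpr rfl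
  have cross : ∀ (v₁ : G₁.V) (v₂ : G₂.V),
      glueLabel j₁ j₂ (Sum.inl v₁) = glueLabel j₁ j₂ (Sum.inr v₂) →
      (v₁ = p₁ ∧ v₂ = p₂) ∨ (v₁ = q₁ ∧ v₂ = q₂) ∨ (v₁ = s₁ ∧ v₂ = s₂) := by
    intro v₁ v₂ h
    replace h : (Function.partialInv j₁ v₁).map (glueInl _ _ _) =
      (Function.partialInv j₂ v₂).map (glueInr _ _ _) := h
    cases h₁ : Function.partialInv j₁ v₁ with
    | none =>
      rw [h₁, Option.map_none, eq_comm, Option.map_eq_none_iff] at h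
      exact Or.inl ⟨(r₁ _).mp h₁, (r₂ _).mp h⟩
    | some u₁ =>
      cases h₂ : Function.partialInv j₂ v₂ with
      | none => simp [h₁, h₂] at h
      | some u₂ =>
        rw [h₁, h₂, Option.map_some, Option.map_some, Option.some_inj] at h
        have e₁ := (i₁.isPartialInv _ _).mp h₁
        have e₂ := (i₂.isPartialInv _ _).mp h₂
        rcases u₁ with c | a <;> rcases u₂ with d | b <;> simp [glueInl, glueInr] at h
        subst h
        right
        fin_cases c
        · exact Or.inl ⟨e₁.symm, e₂.symm⟩
        · exact Or.inr ⟨e₁.symm, e₂.symm⟩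
  refine t_quot_eq_det (G₁.disjUnion G₂) _ (f := glueLabel j₁ j₂) ?_ ?_ ?_
  · rintro (_ | c | a | b)
    · exact ⟨Sum.inl p₁, by simp [glueLabel, (r₁ p₁).mpr rfl]⟩
    · exact ⟨Sum.inl (j₁ (Sum.inl c)),
        by simp [glueLabel, Function.partialInv_left i₁, glueInl]⟩
    · exact ⟨Sum.inl (j₁ (Sum.inr a)),
        by simp [glueLabel, Function.partialInv_left i₁, glueInl]⟩
    · exact ⟨Sum.inr (j₂ (Sum.inr b)),
        by simp [glueLabel, Function.partialInv_left i₂, glueInr]⟩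
  · rintro x y (⟨rfl, rfl⟩ | ⟨rfl, rfl⟩ | ⟨rfl, rfl⟩)
    · simp [glueLabel, (r₁ p₁).mpr rfl, (r₂ p₂).mpr rfl]
    · simp [glueLabel, q₁', q₂', glueInl, glueInr]
    · simp [glueLabel, s₁', s₂', glueInl, glueInr]
  · have sound : ∀ (v₁ : G₁.V) (v₂ : G₂.V),
        (v₁ = p₁ ∧ v₂ = p₂) ∨ (v₁ = q₁ ∧ v₂ = q₂) ∨ (v₁ = s₁ ∧ v₂ = s₂) →
        Quot.mk (fun x y : (G₁.disjUnion G₂).V => (x = Sum.inl p₁ ∧ y = Sum.inr p₂) ∨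
          (x = Sum.inl q₁ ∧ y = Sum.inr q₂) ∨ (x = Sum.inl s₁ ∧ y = Sum.inr s₂)) (Sum.inl v₁) =
        Quot.mk _ (Sum.inr v₂) := by
      rintro v₁ v₂ (⟨rfl, rfl⟩ | ⟨rfl, rfl⟩ | ⟨rfl, rfl⟩)
      · exact Quot.sound (Or.inl ⟨rfl, rfl⟩)
      · exact Quot.sound (Or.inr (Or.inl ⟨rfl, rfl⟩))
      · exact Quot.sound (Or.inr (Or.inr ⟨rfl, rfl⟩))
    rintro (x | x) (y | y) h
    · have h' := Option.map_injective (glueInl_injective _ _ _) h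
      rw [partialInv_inj i₁ (fun v => (r₁ v).mp) h']
    · exact sound x y (cross x y h)
    · exact (sound y x (cross y x h.symm)).symm
    · have h' := Option.map_injective (glueInr_injective _ _ _) h
      rw [partialInv_inj i₂ (fun v => (r₂ v).mp) h']

end Glue

end WMG


/-- If the connected multigraph `G` is the union of two connected subgraphs
`G₁, G₂` sharing exactly three vertices `p, q, s` (and no edges), then with
`a_i = t(G_{i,ps})`, `b_i = t(G_{i,pq})`, `c_i = t(G_{i,qs})`:
`t(G) = t(G₁) t(G_{2,pqs}) + t(G₂) t(G_{1,pqs})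
  + (1/2)[a₁(-a₂+b₂+c₂) + b₁(a₂-b₂+c₂) + c₁(a₂+b₂-c₂)]`.
In particular, if `G₁ = G₂` glued along the same three vertices, then
`t(G) = 4 t(G₁) t(G_{1,pqs})`. -/
theorem spanning_trees_of_three_vertex_union :
    (∀ (G₁ G₂ : WMG) (p₁ q₁ s₁ : G₁.V) (p₂ q₂ s₂ : G₂.V),
      G₁.Connected → G₂.Connected →
      p₁ ≠ q₁ → p₁ ≠ s₁ → q₁ ≠ s₁ → p₂ ≠ q₂ → p₂ ≠ s₂ → q₂ ≠ s₂ →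
      ((G₁.glue3 G₂ p₁ q₁ s₁ p₂ q₂ s₂).t : ℝ) =
        (G₁.t : ℝ) * ((G₂.ident3 p₂ q₂ s₂).t : ℝ) +
        (G₂.t : ℝ) * ((G₁.ident3 p₁ q₁ s₁).t : ℝ) +
        (1 / 2) *
          (((G₁.ident2 p₁ s₁).t : ℝ) *
              (-((G₂.ident2 p₂ s₂).t : ℝ) + ((G₂.ident2 p₂ q₂).t : ℝ) +
                ((G₂.ident2 q₂ s₂).t : ℝ)) +
           ((G₁.ident2 p₁ q₁).t : ℝ) *
              (((G₂.ident2 p₂ s₂).t : ℝ) - ((G₂.ident2 p₂ q₂).t : ℝ) +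
                ((G₂.ident2 q₂ s₂).t : ℝ)) +
           ((G₁.ident2 q₁ s₁).t : ℝ) *
              (((G₂.ident2 p₂ s₂).t : ℝ) + ((G₂.ident2 p₂ q₂).t : ℝ) -
                ((G₂.ident2 q₂ s₂).t : ℝ)))) ∧
    (∀ (G₀ : WMG) (p q s : G₀.V), G₀.Connected → p ≠ q → p ≠ s → q ≠ s →
      (G₀.glue3 G₀ p q s p q s).t = 4 * G₀.t * (G₀.ident3 p q s).t) := by
  have main : ∀ (G₁ G₂ : WMG) (p₁ q₁ s₁ : G₁.V) (p₂ q₂ s₂ : G₂.V),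
      G₁.Connected → G₂.Connected → Function.Injective ![p₁, q₁, s₁] →
      Function.Injective ![p₂, q₂, s₂] →
      ((G₁.glue3 G₂ p₁ q₁ s₁ p₂ q₂ s₂).t : ℝ) =
        (G₁.interiorLap ![p₁, q₁, s₁]).det * (G₂.interiorLap ![p₂, q₂, s₂]).det *
        ((G₁.response ![p₁, q₁, s₁] 1 1 + G₂.response ![p₂, q₂, s₂] 1 1) *
          (G₁.response ![p₁, q₁, s₁] 2 2 + G₂.response ![p₂, q₂, s₂] 2 2) -
          (G₁.response ![p₁, q₁, s₁] 1 2 + G₂.response ![p₂, q₂, s₂] 1 2) ^ 2) := by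
    intro G₁ G₂ p₁ q₁ s₁ p₂ q₂ s₂ hG₁ hG₂ hτ₁ hτ₂
    have e₁ := (WMG.response_isSymm (τ := ![p₁, q₁, s₁])).apply 1 2
    have e₂ := (WMG.response_isSymm (τ := ![p₂, q₂, s₂])).apply 1 2
    rw [WMG.t_glue3_eq_det G₁ G₂ hG₁ hG₂ hτ₁ hτ₂, Matrix.det_fin_two]
    simp [e₁, e₂, sq]
  refine ⟨?_, ?_⟩
  · intro G₁ G₂ p₁ q₁ s₁ p₂ q₂ s₂ hG₁ hG₂ hpq₁ hps₁ hqs₁ hpq₂ hps₂ hqs₂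
    have hτ₁ := WMG.injective_terminals hpq₁ hps₁ hqs₁
    have hτ₂ := WMG.injective_terminals hpq₂ hps₂ hqs₂
    have a₁ := WMG.t_ident2_eq_det hτ₁ hG₁ 0 2 1 (by decide) (by decide) (by decide)
    have a₂ := WMG.t_ident2_eq_det hτ₂ hG₂ 0 2 1 (by decide) (by decide) (by decide)
    have b₁ := WMG.t_ident2_eq_det hτ₁ hG₁ 0 1 2 (by decide) (by decide) (by decide)
    have b₂ := WMG.t_ident2_eq_det hτ₂ hG₂ 0 1 2 (by decide) (by decide) (by decide)
    have c₁ := WMG.t_ident2_eq_det hτ₁ hG₁ 1 2 0 (by decide) (by decide) (by decide)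
    have c₂ := WMG.t_ident2_eq_det hτ₂ hG₂ 1 2 0 (by decide) (by decide) (by decide)
    rw [WMG.response_zero_zero hτ₁ hG₁] at c₁
    rw [WMG.response_zero_zero hτ₂ hG₂] at c₂
    simp only [Matrix.cons_val] at a₁ a₂ b₁ b₂ c₁ c₂
    rw [main G₁ G₂ p₁ q₁ s₁ p₂ q₂ s₂ hG₁ hG₂ hτ₁ hτ₂, WMG.t_eq_det_response hτ₁ hG₁,
      WMG.t_eq_det_response hτ₂ hG₂, WMG.t_ident3_eq_det hτ₁ hG₁, WMG.t_ident3_eq_det hτ₂ hG₂,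
      a₁, a₂, b₁, b₂, c₁, c₂]
    ring
  · intro G p q s hG hpq hps hqs
    have hτ := WMG.injective_terminals hpq hps hqs
    have h : ((G.glue3 G p q s p q s).t : ℝ) = 4 * G.t * (G.ident3 p q s).t := by
      rw [main G G p q s p q s hG hG hτ hτ, WMG.t_eq_det_response hτ hG,
        WMG.t_ident3_eq_det hτ hG]
      ring
    exact_mod_cast h
end

section
/- Let a ≥ 1 and n ≥ 2 be integers and let W̄_n be the modified wheel graph: the cycle graph C_n with vertices p₁, …, p_n together with one new hub vertex p joined to each p_i by a parallel edges. Then t(W̄_n) = a·W_{n−1}(a), where W_m(x) = Σ_{k=0}^{m} ((2m+2)/(m+2+k))·C(m+2+k, m−k)·x^k. In particular, when a = 1, t(W_n) = L_{2n} − 2, where L_m is the m-th Lucas number. -/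
open scoped Classical

namespace WMG

lemma finSucc_eq_add_one {m : ℕ} (i : Fin (m + 1)) : finSucc i = i + 1 := by
  ext
  simp [finSucc, Fin.val_add]

/-- The edge of the wheel chosen by the rim vertex `i` as the first step towards the hub:
`inl true` is the rim edge to `i + 1`, `inl false` the rim edge to `i - 1`, and `inr k` the
`k`-th spoke. -/
def parentEdge {m a : ℕ} (i : Fin (m + 1)) : Bool ⊕ Fin a → (wheelGraph (m + 1) a).E
  | .inl true => Sum.inl i
  | .inl false => Sum.inl (i - 1)
  | .inr k => Sum.inr ⟨i, k⟩

/-- The other endpoint of `parentEdge i c`. -/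
def parent {m a : ℕ} (i : Fin (m + 1)) : Bool ⊕ Fin a → (wheelGraph (m + 1) a).V
  | .inl true => some (i + 1)
  | .inl false => some (i - 1)
  | .inr _ => none

lemma ends_parentEdge {m a : ℕ} (i : Fin (m + 1)) (c : Bool ⊕ Fin a) :
    (wheelGraph (m + 1) a).ends (parentEdge i c) = (some i, parent i c) ∨
      (wheelGraph (m + 1) a).ends (parentEdge i c) = (parent i c, some i) := by
  rcases c with (_ | _) | k
  · right
    simp [wheelGraph, cone, cycle, parentEdge, parent, finSucc_eq_add_one]
  · left
    simp [wheelGraph, cone, cycle, parentEdge, parent, finSucc_eq_add_one]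
  · right
    rfl

/-- Every edge at a rim vertex is one of its possible parent edges. -/
lemma exists_parentEdge_eq {m a : ℕ} {i : Fin (m + 1)} {u : (wheelGraph (m + 1) a).V}
    {e : (wheelGraph (m + 1) a).E}
    (h : (wheelGraph (m + 1) a).ends e = (some i, u) ∨
      (wheelGraph (m + 1) a).ends e = (u, some i)) :
    ∃ c : Bool ⊕ Fin a, parentEdge i c = e ∧ parent i c = u := by
  rcases e with (j : Fin (m + 1)) | ⟨j, k⟩
  · have hj : (wheelGraph (m + 1) a).ends (Sum.inl j) = (some j, some (j + 1)) :=
      congrArg (fun l : Fin (m + 1) => (some j, some l)) (finSucc_eq_add_one j)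
    rw [hj] at h
    rcases h with h | h
    · obtain ⟨h₁, h₂⟩ := Prod.mk.inj h
      obtain rfl : j = i := Option.some.inj h₁
      exact ⟨.inl true, rfl, h₂⟩
    · obtain ⟨h₁, h₂⟩ := Prod.mk.inj h
      obtain rfl : j + 1 = i := Option.some.inj h₂
      refine ⟨.inl false, congrArg Sum.inl (add_sub_cancel_right j 1), ?_⟩
      exact (congrArg some (add_sub_cancel_right j 1)).trans h₁
  · rcases h with h | h
    · cases (Prod.mk.inj h).1
    · obtain ⟨h₁, h₂⟩ := Prod.mk.inj h
      obtain rfl := Option.some.inj h₂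
      exact ⟨.inr k, rfl, h₁⟩

/-- No rim edge is chosen by both of its endpoints. -/
def NoClash {m a : ℕ} (f : Fin (m + 1) → Bool ⊕ Fin a) : Prop :=
  ∀ i, ¬ (f i = .inl true ∧ f (i + 1) = .inl false)

/-- The parent assignments of the wheel without cycles. -/
def Acyclic {m a : ℕ} (f : Fin (m + 1) → Bool ⊕ Fin a) : Prop :=
  NoClash f ∧ (∃ i, f i ≠ .inl true) ∧ ∃ i, f i ≠ .inl false

open Fin.CommRing in
lemma Acyclic.induction {m a : ℕ} {f : Fin (m + 1) → Bool ⊕ Fin a} (hf : Acyclic f)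
    {P : Fin (m + 1) → Prop} (spoke : ∀ i k, f i = .inr k → P i)
    (next : ∀ i, f i = .inl true → P (i + 1) → P i)
    (prev : ∀ i, f i = .inl false → P (i - 1) → P i) (i : Fin (m + 1)) : P i := by
  obtain ⟨hc, ⟨s, hs⟩, ⟨r, hr⟩⟩ := hf
  have up : ∀ (l : ℕ) (i : Fin (m + 1)), f i ≠ .inl false → f (i + l) ≠ .inl true → P i := by
    intro l
    induction l with
    | zero =>
      intro i h₁ h₂
      match h : f i with
      | .inl true => simp [h] at h₂
      | .inl false => exact absurd h h₁
      | .inr k => exact spoke i k h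
    | succ l ih =>
      intro i h₁ h₂
      match h : f i with
      | .inl true =>
        refine next i h (ih _ (fun h' => hc i ⟨h, h'⟩) ?_)
        rwa [add_assoc, add_comm 1, ← Nat.cast_succ]
      | .inl false => exact absurd h h₁
      | .inr k => exact spoke i k h
  have down : ∀ (l : ℕ) (i : Fin (m + 1)), f i ≠ .inl true → f (i - l) ≠ .inl false → P i := by
    intro l
    induction l with
    | zero =>
      intro i h₁ h₂
      match h : f i with
      | .inl false => simp [h] at h₂
      | .inl true => exact absurd h h₁
      | .inr k => exact spoke i k h
    | succ l ih =>
      intro i h₁ h₂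
      match h : f i with
      | .inl false =>
        refine prev i h (ih _ (fun h' => hc (i - 1) ⟨h', by simpa using h⟩) ?_)
        rwa [sub_sub, add_comm 1, ← Nat.cast_succ]
      | .inl true => exact absurd h h₁
      | .inr k => exact spoke i k h
  by_cases h : f i = .inl false
  · refine down (i - r : Fin (m + 1)).val i (by simp [h]) ?_
    simpa using hr
  · refine up (s - i : Fin (m + 1)).val i h ?_
    simpa using hs

lemma NoClash.parentEdge_injective {m a : ℕ} {f : Fin (m + 1) → Bool ⊕ Fin a}
    (hf : NoClash f) : Function.Injective fun i => parentEdge i (f i) := by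
  intro i j hij
  have clash : ∀ {i j : Fin (m + 1)}, f i = .inl true → f j = .inl false → i ≠ j - 1 := by
    rintro i j hi hj rfl
    exact hf _ ⟨hi, by simpa using hj⟩
  match hi : f i, hj : f j with
  | .inl true, .inl true =>
    simp only [hi, hj, parentEdge] at hij
    exact Sum.inl.inj hij
  | .inl true, .inl false =>
    simp only [hi, hj, parentEdge] at hij
    exact absurd (Sum.inl.inj hij) (clash hi hj)
  | .inl false, .inl true =>
    simp only [hi, hj, parentEdge] at hij
    exact absurd (Sum.inl.inj hij).symm (clash hj hi)
  | .inl false, .inl false =>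
    simp only [hi, hj, parentEdge] at hij
    exact sub_left_injective (Sum.inl.inj hij)
  | .inr k, .inr l =>
    simp only [hi, hj, parentEdge] at hij
    exact congrArg Sigma.fst (Sum.inr.inj hij)
  | .inl true, .inr _ => simp only [hi, hj, parentEdge] at hij; cases hij
  | .inl false, .inr _ => simp only [hi, hj, parentEdge] at hij; cases hij
  | .inr _, .inl true => simp only [hi, hj, parentEdge] at hij; cases hij
  | .inr _, .inl false => simp only [hi, hj, parentEdge] at hij; cases hij

/-- The set of all parent edges of an assignment. -/
noncomputable def parentEdges {m a : ℕ} (f : Fin (m + 1) → Bool ⊕ Fin a) :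
    Finset (wheelGraph (m + 1) a).E :=
  Finset.univ.image fun i => parentEdge i (f i)

lemma parentEdge_mem_parentEdges {m a : ℕ} (f : Fin (m + 1) → Bool ⊕ Fin a) (i : Fin (m + 1)) :
    parentEdge i (f i) ∈ parentEdges f :=
  Finset.mem_image_of_mem _ (Finset.mem_univ i)

lemma NoClash.card_parentEdges {m a : ℕ} {f : Fin (m + 1) → Bool ⊕ Fin a} (hf : NoClash f) :
    (parentEdges f).card = m + 1 := by
  rw [parentEdges, Finset.card_image_of_injective _ hf.parentEdge_injective, Finset.card_univ,
    Fintype.card_fin]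

lemma card_wheelGraph_V (n a : ℕ) : Fintype.card (wheelGraph n a).V = n + 1 := by
  change Fintype.card (Option (Fin n)) = n + 1
  simp

lemma Acyclic.isSpanningTree {m a : ℕ} {f : Fin (m + 1) → Bool ⊕ Fin a} (hf : Acyclic f) :
    (wheelGraph (m + 1) a).IsSpanningTree (parentEdges f) := by
  refine ⟨?_, by rw [hf.1.card_parentEdges, card_wheelGraph_V, Nat.add_sub_cancel]⟩
  set R : (wheelGraph (m + 1) a).V → (wheelGraph (m + 1) a).V → Prop :=
    fun x y => ∃ e ∈ parentEdges f, (wheelGraph (m + 1) a).ends e = (x, y) ∨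
      (wheelGraph (m + 1) a).ends e = (y, x)
  have step : ∀ i, R (some i) (parent i (f i)) := fun i =>
    ⟨_, parentEdge_mem_parentEdges f i, ends_parentEdge i (f i)⟩
  have hub : ∀ v, Relation.ReflTransGen R v none := by
    rintro (_ | i)
    · exact .refl
    · refine hf.induction (P := fun i => Relation.ReflTransGen R (some i) none) ?_ ?_ ?_ i
      · intro i k h
        have := step i
        rw [h] at this
        exact .single this
      · intro i h ih
        have := step i
        rw [h] at this
        exact .head this ih
      · intro i h ih
        have := step i
        rw [h] at this
        exact .head this ih
  have : Std.Symm R := ⟨fun x y ⟨e, he, h⟩ => ⟨e, he, h.symm⟩⟩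
  exact fun u v => (hub u).trans (symm_of (Relation.ReflTransGen R) (hub v))

lemma Acyclic.eq_of_parentEdges_eq {m a : ℕ} {f g : Fin (m + 1) → Bool ⊕ Fin a}
    (hf : Acyclic f) (h : parentEdges f = parentEdges g) : f = g := by
  have mem : ∀ i, ∃ j, parentEdge j (g j) = parentEdge i (f i) := fun i => by
    have := parentEdge_mem_parentEdges f i
    rw [h] at this
    simpa [parentEdges] using this
  funext i
  refine hf.induction (P := fun i => f i = g i) ?_ ?_ ?_ i
  · intro i k hi
    obtain ⟨j, hj⟩ := mem i
    rw [hi] at hj ⊢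
    match hg : g j with
    | .inl true => rw [hg] at hj; cases hj
    | .inl false => rw [hg] at hj; cases hj
    | .inr l => rw [hg] at hj; cases hj; exact hg.symm
  · intro i hi ih
    obtain ⟨j, hj⟩ := mem i
    rw [hi] at hj ⊢
    match hg : g j with
    | .inl true => rw [hg] at hj; cases hj; exact hg.symm
    | .inl false =>
      rw [hg] at hj
      obtain rfl : j - 1 = i := Sum.inl.inj hj
      refine absurd ⟨hi, ?_⟩ (hf.1 (j - 1))
      rw [ih, sub_add_cancel, hg]
    | .inr l => rw [hg] at hj; cases hj
  · intro i hi ih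
    obtain ⟨j, hj⟩ := mem i
    rw [hi] at hj ⊢
    match hg : g j with
    | .inl false =>
      rw [hg] at hj
      obtain rfl : j = i := sub_left_injective (Sum.inl.inj hj)
      exact hg.symm
    | .inl true =>
      rw [hg] at hj
      obtain rfl : j = i - 1 := Sum.inl.inj hj
      refine absurd ⟨?_, ?_⟩ (hf.1 (i - 1))
      · rw [ih, hg]
      · rw [sub_add_cancel, hi]
    | .inr l => rw [hg] at hj; cases hj

/-- If every point is joined to `r`, some function `d` (the distance to `r`) can be strictly
decreased by a step from any point other than `r`. -/
lemma exists_descent {V : Type*} {R : V → V → Prop} {r : V}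
    (h : ∀ v, Relation.ReflTransGen R v r) :
    ∃ d : V → ℕ, ∀ v, v ≠ r → ∃ u, R v u ∧ d u < d v := by
  let S (k : ℕ) : V → Prop := Nat.rec (· = r) (fun _ P v => ∃ u, R v u ∧ P u) k
  have hS : ∀ v, ∃ k, S k v := fun v => by
    induction h v using Relation.ReflTransGen.head_induction_on with
    | refl => exact ⟨0, rfl⟩
    | head hab _ ih => exact ⟨ih.choose + 1, _, hab, ih.choose_spec⟩
  refine ⟨fun v => sInf {k | S k v}, fun v hv => ?_⟩
  have spec : S (sInf {k | S k v}) v := Nat.sInf_mem (hS v)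
  match hk : sInf {k | S k v} with
  | 0 => rw [hk] at spec; exact absurd spec hv
  | k + 1 =>
    rw [hk] at spec
    obtain ⟨u, hu, hku⟩ := spec
    exact ⟨u, hu, (Nat.lt_succ_of_le (Nat.sInf_le hku)).trans_eq hk.symm⟩

lemma IsSpanningTree.exists_acyclic {m a : ℕ} {T : Finset (wheelGraph (m + 1) a).E}
    (hT : (wheelGraph (m + 1) a).IsSpanningTree T) :
    ∃ f : Fin (m + 1) → Bool ⊕ Fin a, Acyclic f ∧ parentEdges f = T := by
  obtain ⟨hconn, hcard⟩ := hT
  rw [card_wheelGraph_V, Nat.add_sub_cancel] at hcard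
  obtain ⟨d, hd⟩ := exists_descent fun v => hconn v none
  have choice : ∀ i : Fin (m + 1), ∃ c : Bool ⊕ Fin a,
      parentEdge i c ∈ T ∧ d (parent i c) < d (some i) := fun i => by
    obtain ⟨u, ⟨e, he, h⟩, hu⟩ := hd (some i) (Option.some_ne_none i)
    obtain ⟨c, rfl, rfl⟩ := exists_parentEdge_eq h
    exact ⟨c, he, hu⟩
  choose f hfT hfd using choice
  have hc : NoClash f := fun i ⟨h₁, h₂⟩ => by
    have l₁ := hfd i
    have l₂ := hfd (i + 1)
    rw [h₁] at l₁
    rw [h₂] at l₂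
    have hp : parent (a := a) (i + 1) (.inl false) = some i :=
      congrArg some (add_sub_cancel_right i 1)
    rw [hp] at l₂
    exact lt_asymm l₁ l₂
  obtain ⟨i₀, hi₀⟩ := Finite.exists_min fun i : Fin (m + 1) => d (some i)
  refine ⟨f, ⟨hc, ⟨i₀, fun h => ?_⟩, ⟨i₀, fun h => ?_⟩⟩, ?_⟩
  · have := hfd i₀
    rw [h] at this
    exact absurd (hi₀ (i₀ + 1)) (not_le.2 this)
  · have := hfd i₀
    rw [h] at this
    exact absurd (hi₀ (i₀ - 1)) (not_le.2 this)
  · refine Finset.eq_of_subset_of_card_le ?_ (by rw [hc.card_parentEdges, hcard])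
    simpa [parentEdges, Finset.subset_iff] using hfT

lemma t_wheelGraph_eq_card_acyclic (m a : ℕ) :
    (wheelGraph (m + 1) a).t = Nat.card {f : Fin (m + 1) → Bool ⊕ Fin a // Acyclic f} := by
  refine (Nat.card_congr (Equiv.ofBijective
    (fun f : {f : Fin (m + 1) → Bool ⊕ Fin a // Acyclic f} =>
      (⟨parentEdges f.1, f.2.isSpanningTree⟩ :
        {T // (wheelGraph (m + 1) a).IsSpanningTree T})) ⟨?_, ?_⟩)).symm
  · intro f g h
    exact Subtype.ext (f.2.eq_of_parentEdges_eq (congrArg Subtype.val h))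
  · rintro ⟨T, hT⟩
    obtain ⟨f, hf, rfl⟩ := hT.exists_acyclic
    exact ⟨⟨f, hf⟩, rfl⟩

lemma card_acyclic_add_two (m a : ℕ) :
    Nat.card {f : Fin (m + 1) → Bool ⊕ Fin a // Acyclic f} + 2 =
      Nat.card {f : Fin (m + 1) → Bool ⊕ Fin a // NoClash f} := by
  simp only [Nat.card_eq_fintype_card, Fintype.card_subtype]
  have hne : (fun _ : Fin (m + 1) => (.inl true : Bool ⊕ Fin a)) ≠ fun _ => .inl false :=
    fun h => by simpa using congrFun h 0
  rw [← Finset.card_pair hne, ← Finset.card_union_of_disjoint]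
  · congr 1
    ext f
    simp only [Finset.mem_union, Finset.mem_filter, Finset.mem_univ, true_and, Finset.mem_insert,
      Finset.mem_singleton, Acyclic, funext_iff, ne_eq, ← not_forall]
    constructor
    · rintro (h | h | h)
      · exact h.1
      · exact fun i hi => by simpa [h] using hi.2
      · exact fun i hi => by simpa [h] using hi.1
    · tauto
  · rw [Finset.disjoint_left]
    intro f hf hf'
    have hf := (Finset.mem_filter.1 hf).2
    rw [Finset.mem_insert, Finset.mem_singleton] at hf'
    rcases hf' with rfl | rfl
    · simp [Acyclic] at hf
    · simp [Acyclic] at hf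

end WMG

lemma Matrix.sum_prod_path_eq {C R : Type*} [Fintype C] [DecidableEq C] [CommRing R]
    (M : Matrix C C R) (m : ℕ) (g : C → C → R) :
    ∑ f : Fin (m + 1) → C,
        (∏ i : Fin m, M (f i.castSucc) (f i.succ)) * g (f (Fin.last m)) (f 0) =
      ∑ x, ∑ y, (M ^ m) x y * g y x := by
  induction m generalizing g with
  | zero =>
    rw [← (Equiv.funUnique (Fin 1) C).symm.sum_comp]
    simp [Matrix.one_apply]
  | succ m ih =>
    rw [← (Fin.consEquiv fun _ : Fin (m + 2) => C).sum_comp, Fintype.sum_prod_type]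
    refine Finset.sum_congr rfl fun x _ => ?_
    have := ih fun y z => M x z * g y x
    simp only [Fin.consEquiv_apply, Fin.prod_univ_succ, Fin.castSucc_zero, Fin.cons_zero,
      Fin.cons_succ, ← Fin.succ_castSucc, ← Fin.succ_last]
    refine Eq.trans (Finset.sum_congr rfl fun f _ => ?_) (this.trans ?_)
    · ring
    · rw [Finset.sum_comm]
      refine Finset.sum_congr rfl fun y _ => ?_
      rw [pow_succ', Matrix.mul_apply, Finset.sum_mul]
      exact Finset.sum_congr rfl fun z _ => by ring

/-- The trace of `M ^ (m + 1)` counts closed walks of length `m + 1`. -/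
lemma Matrix.sum_prod_cycle_eq_trace {C R : Type*} [Fintype C] [DecidableEq C] [CommRing R]
    (M : Matrix C C R) (m : ℕ) :
    ∑ f : Fin (m + 1) → C, ∏ i, M (f i) (f (i + 1)) = (M ^ (m + 1)).trace := by
  have := M.sum_prod_path_eq m M
  simp only [Fin.prod_univ_castSucc, Fin.coeSucc_eq_succ, Fin.last_add_one]
  rw [this, Matrix.trace, pow_succ]
  simp [Matrix.mul_apply]

/-- The solution of `s (n + 2) = (a + 2) s (n + 1) - s n` with `s 0 = 2` and `s 1 = a + 2`. -/
def wheelTrace (a : ℤ) : ℕ → ℤ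
  | 0 => 2
  | 1 => a + 2
  | n + 2 => (a + 2) * wheelTrace a (n + 1) - wheelTrace a n

lemma trace_pow_eq_wheelTrace (a : ℤ) (n : ℕ) :
    (!![a + 2, 1; -1, 0] ^ n : Matrix (Fin 2) (Fin 2) ℤ).trace = wheelTrace a n := by
  induction n using Nat.twoStepInduction with
  | zero => simp [wheelTrace]
  | one => simp [wheelTrace, Matrix.trace_fin_two]
  | more n ih₀ ih₁ =>
    have h : (!![a + 2, 1; -1, 0] ^ 2 : Matrix (Fin 2) (Fin 2) ℤ) =
        (a + 2) • !![a + 2, 1; -1, 0] - 1 := by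
      ext i j
      fin_cases i <;> fin_cases j
      all_goals simp [pow_two]
      ring
    rw [pow_add, h, mul_sub, mul_one, Matrix.mul_smul, ← pow_succ, Matrix.trace_sub,
      Matrix.trace_smul, ih₀, ih₁, wheelTrace, smul_eq_mul]

namespace WMG

lemma card_noClash (m a : ℕ) :
    (Nat.card {f : Fin (m + 1) → Bool ⊕ Fin a // NoClash f} : ℤ) = wheelTrace a (m + 1) := by
  let U : Matrix (Bool ⊕ Fin a) (Fin 2) ℤ :=
    .of fun c => ![1, if c = .inl true then 1 else 0]
  let W : Matrix (Fin 2) (Bool ⊕ Fin a) ℤ :=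
    .of ![fun _ => 1, fun c => if c = .inl false then -1 else 0]
  have hUW : ∀ c c', (U * W) c c' = if c = .inl true ∧ c' = .inl false then 0 else 1 := by
    intro c c'
    by_cases h : c = .inl true
    all_goals by_cases h' : c' = .inl false
    all_goals simp [U, W, Matrix.mul_apply, Fin.sum_univ_two, h, h']
  have hWU : W * U = !![(a : ℤ) + 2, 1; -1, 0] := by
    ext i j
    fin_cases i <;> fin_cases j <;> simp [U, W, Matrix.mul_apply, add_comm]
  have hpow : ∀ k : ℕ, (U * W) ^ (k + 1) = U * (W * U) ^ k * W := by
    intro k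
    induction k with
    | zero => simp
    | succ k ih => rw [pow_succ, ih, pow_succ]; simp only [Matrix.mul_assoc]
  rw [← trace_pow_eq_wheelTrace, ← hWU, pow_succ', Matrix.mul_assoc, Matrix.trace_mul_comm, ← hpow,
    ← Matrix.sum_prod_cycle_eq_trace, Nat.card_eq_fintype_card, Fintype.card_subtype,
    Finset.card_filter, Nat.cast_sum]
  refine Finset.sum_congr rfl fun f _ => ?_
  simp only [hUW]
  by_cases h : NoClash f
  · simp only [h, if_true, Nat.cast_one]
    exact (Finset.prod_eq_one fun i _ => if_neg (h i)).symm
  · simp only [h, if_false, Nat.cast_zero]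
    simp only [NoClash, not_forall, not_not] at h
    obtain ⟨i, hi⟩ := h
    exact Eq.symm (Finset.prod_eq_zero (Finset.mem_univ i) (if_pos hi))

lemma t_wheelGraph (m a : ℕ) : ((wheelGraph (m + 1) a).t : ℤ) = wheelTrace a (m + 1) - 2 := by
  rw [← card_noClash, ← card_acyclic_add_two, t_wheelGraph_eq_card_acyclic, Nat.cast_add,
    Nat.cast_ofNat, add_sub_cancel_right]

end WMG

/-- The coefficient of `x ^ (k + 1)` in `x * W_{n - 1}(x)`. -/
def wheelCoeff (n k : ℕ) : ℕ := (n + k + 1).choose (2 * k + 2) + (n + k).choose (2 * k + 2)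

lemma wheelCoeff_eq_zero {n k : ℕ} (h : n ≤ k) : wheelCoeff n k = 0 := by
  simp [wheelCoeff, Nat.choose_eq_zero_of_lt (show n + k + 1 < 2 * k + 2 by omega),
    Nat.choose_eq_zero_of_lt (show n + k < 2 * k + 2 by omega)]

lemma wheelCoeff_zero_add_two (n : ℕ) :
    wheelCoeff (n + 2) 0 + wheelCoeff n 0 = 2 * wheelCoeff (n + 1) 0 + 2 := by
  simp [wheelCoeff, Nat.choose_succ_succ' _ 1]
  ring

lemma wheelCoeff_succ_add_two (n k : ℕ) :
    wheelCoeff (n + 2) (k + 1) + wheelCoeff n (k + 1) =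
      2 * wheelCoeff (n + 1) (k + 1) + wheelCoeff (n + 1) k := by
  have h (p q : ℕ) : (p + 2).choose (q + 2) + p.choose (q + 2) =
      2 * (p + 1).choose (q + 2) + p.choose q := by
    simp only [Nat.choose_succ_succ']
    ring
  have h₁ := h (n + k + 2) (2 * k + 2)
  have h₂ := h (n + k + 1) (2 * k + 2)
  simp only [wheelCoeff]
  ring_nf at h₁ h₂ ⊢
  omega

lemma wheelCoeff_succ_eq {m k : ℕ} (h : k ≤ m) :
    (wheelCoeff (m + 1) k : ℝ) =
      (2 * m + 2 : ℝ) / (m + 2 + k : ℝ) * ((m + 2 + k).choose (m - k) : ℝ) := by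
  have hs : (m + 2 + k).choose (m - k) = (m + k + 2).choose (2 * k + 2) := by
    rw [← Nat.choose_symm_of_eq_add (show m + 2 + k = (2 * k + 2) + (m - k) by omega)]
    congr 1
    omega
  have hm := Nat.choose_mul_succ_eq (m + k + 1) (2 * k + 2)
  have hsub : m + k + 1 + 1 - (2 * k + 2) = m - k := by omega
  rw [hsub] at hm
  have hm' : ((m + k + 1).choose (2 * k + 2) : ℝ) * (m + k + 2) =
      (m + k + 2).choose (2 * k + 2) * (m - k) := by
    rw [← Nat.cast_sub h]
    exact_mod_cast hm
  rw [hs, wheelCoeff, show m + 1 + k + 1 = m + k + 2 by ring, show m + 1 + k = m + k + 1 by ring]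
  have : (m + 2 + k : ℝ) ≠ 0 := by positivity
  push_cast
  field_simp
  linear_combination hm'

lemma wheelTrace_eq_sum (a n N : ℕ) (h : n ≤ N) :
    wheelTrace a n = 2 + ∑ k ∈ Finset.range N, (wheelCoeff n k : ℤ) * (a : ℤ) ^ (k + 1) := by
  induction n using Nat.twoStepInduction with
  | zero => simp [wheelTrace, wheelCoeff_eq_zero]
  | one =>
    obtain ⟨N, rfl⟩ := Nat.exists_eq_add_of_le' h
    rw [Finset.sum_range_succ', Finset.sum_eq_zero fun k _ => by
      rw [wheelCoeff_eq_zero (by omega)]; simp]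
    simp [wheelTrace, wheelCoeff, add_comm]
  | more n ih₀ ih₁ =>
    obtain ⟨N, rfl⟩ := Nat.exists_eq_add_of_le' (show 1 ≤ N by omega)
    rw [wheelTrace, ih₀ (by omega), ih₁ (by omega)]
    have htop : ∑ k ∈ Finset.range (N + 1), (wheelCoeff (n + 1) k : ℤ) * (a : ℤ) ^ (k + 1) =
        ∑ k ∈ Finset.range N, (wheelCoeff (n + 1) k : ℤ) * (a : ℤ) ^ (k + 1) := by
      rw [Finset.sum_range_succ, wheelCoeff_eq_zero (by omega)]
      simp
    have hzero : (wheelCoeff (n + 2) 0 : ℤ) + wheelCoeff n 0 = 2 * wheelCoeff (n + 1) 0 + 2 := by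
      exact_mod_cast wheelCoeff_zero_add_two n
    have hsucc : ∑ k ∈ Finset.range N, (wheelCoeff (n + 2) (k + 1) : ℤ) * (a : ℤ) ^ (k + 1 + 1) =
        2 * ∑ k ∈ Finset.range N, (wheelCoeff (n + 1) (k + 1) : ℤ) * (a : ℤ) ^ (k + 1 + 1) +
        a * ∑ k ∈ Finset.range N, (wheelCoeff (n + 1) k : ℤ) * (a : ℤ) ^ (k + 1) -
        ∑ k ∈ Finset.range N, (wheelCoeff n (k + 1) : ℤ) * (a : ℤ) ^ (k + 1 + 1) := by
      rw [Finset.mul_sum, Finset.mul_sum, ← Finset.sum_add_distrib, ← Finset.sum_sub_distrib]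
      refine Finset.sum_congr rfl fun k _ => ?_
      have : (wheelCoeff (n + 2) (k + 1) : ℤ) + wheelCoeff n (k + 1) =
          2 * wheelCoeff (n + 1) (k + 1) + wheelCoeff (n + 1) k := by
        exact_mod_cast wheelCoeff_succ_add_two n k
      linear_combination (a : ℤ) ^ (k + 1 + 1) * this
    have hsplit := Finset.sum_range_succ'
      (fun k => (wheelCoeff (n + 1) k : ℤ) * (a : ℤ) ^ (k + 1)) N
    rw [Finset.sum_range_succ' (fun k => (wheelCoeff n k : ℤ) * (a : ℤ) ^ (k + 1)),
      Finset.sum_range_succ' (fun k => (wheelCoeff (n + 2) k : ℤ) * (a : ℤ) ^ (k + 1)), hsucc]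
    linear_combination (a : ℤ) * htop + 2 * hsplit - (a : ℤ) * hzero

lemma wheelTrace_eq_wheelPoly (a m : ℕ) :
    (wheelTrace a (m + 1) : ℝ) = 2 + a * wheelPoly m a := by
  rw [wheelTrace_eq_sum a (m + 1) (m + 1) le_rfl, wheelPoly, Finset.mul_sum]
  push_cast
  congr 1
  refine Finset.sum_congr rfl fun k hk => ?_
  rw [wheelCoeff_succ_eq (Nat.lt_succ_iff.1 (Finset.mem_range.1 hk))]
  ring

lemma wheelTrace_one (n : ℕ) : wheelTrace 1 n = lucas (2 * n) := by
  induction n using Nat.twoStepInduction with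
  | zero => simp [wheelTrace, lucas]
  | one => simp [wheelTrace, lucas]
  | more n ih₀ ih₁ =>
    rw [wheelTrace, ih₀, ih₁, show 2 * (n + 2) = 2 * n + 2 + 2 by ring,
      show 2 * (n + 1) = 2 * n + 2 by ring]
    simp only [lucas]
    push_cast
    ring

/-- For integers `a ≥ 1` and `n ≥ 2`, the modified wheel graph satisfies
`t(W̄_n) = a ⬝ W_{n-1}(a)` where
`W_m(x) = ∑_{k=0}^m ((2m+2)/(m+2+k)) C(m+2+k, m-k) x^k`;
in particular `t(W_n) = L_{2n} - 2` (Lucas numbers). -/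
theorem spanning_trees_of_wheel (n a : ℕ) (hn : 2 ≤ n) (ha : 1 ≤ a) :
    ((WMG.wheelGraph n a).t : ℝ) = (a : ℝ) * wheelPoly (n - 1) (a : ℝ) ∧
    (WMG.wheelGraph n 1).t = lucas (2 * n) - 2 := by
  obtain ⟨m, rfl⟩ := Nat.exists_eq_add_of_le' (show 1 ≤ n by omega)
  constructor
  · have h := WMG.t_wheelGraph m a
    have h' : ((WMG.wheelGraph (m + 1) a).t : ℝ) = (wheelTrace a (m + 1) : ℝ) - 2 := by
      exact_mod_cast h
    rw [h', wheelTrace_eq_wheelPoly, Nat.add_sub_cancel]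
    ring
  · have h := WMG.t_wheelGraph m 1
    rw [Nat.cast_one, wheelTrace_one] at h
    omega
end
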